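/- arXiv:2405.14760 — 3 statements merged into one kernel-verified Lean document; each statement's English description precedes it below -/
import Mathlib

section
/- Fix κ ∈ {1, −1}. Let V ⊆ ℝ² be open, with V ⊆ 𝔻 in case κ = −1, and let φ : V → ℝ be a smooth function such that κ·φ(x,y) < 0 for all (x,y) ∈ V and Δφ + 8κφ/(1 + κ(x² + y²))² = 0 on V. Fix real constants m and 𝐤. On U ≔ V × ℝ × ℝ with coordinates (x, y, v, r), define the 1-forms θ ≔ dv − φ_y dx + φ_x dy and ω ≔ dv + dr + (1/2)(−1 + 𝐤·m·r/(r² + φ²))·θ, and the symmetric 2-tensor g ≔ −(κ/2)(r² + φ²)·(4/(1 + κ(x² + y²))²)·(dx ⊗ dx + dy ⊗ dy) + θ ∨ ω. Then at every point of U the matrix (g_{AB}) is invertible, and the Ricci tensor of the coordinate metric g vanishes identically on U (i.e. each metric of the Kerr family (6.1)/(1.7) of the paper, written in the coordinates (x,y,v,r), is Ricci flat). -/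
/-- Partial derivative in `x` of a function of two real variables. -/
noncomputable def pdx (f : ℝ × ℝ → ℝ) (p : ℝ × ℝ) : ℝ := fderiv ℝ f p (1, 0)

/-- Partial derivative in `y` of a function of two real variables. -/
noncomputable def pdy (f : ℝ × ℝ → ℝ) (p : ℝ × ℝ) : ℝ := fderiv ℝ f p (0, 1)

/-- Laplacian of a function of two real variables. -/
noncomputable def lap (f : ℝ × ℝ → ℝ) (p : ℝ × ℝ) : ℝ := pdx (pdx f) p + pdy (pdy f) p

/-- Partial derivative `∂_A` of a function on `ℝ⁴`. -/
noncomputable def pd (A : Fin 4) (f : (Fin 4 → ℝ) → ℝ) (p : Fin 4 → ℝ) : ℝ :=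
  fderiv ℝ f p (Pi.single A 1)

/-- Christoffel symbols `Γ^C_{AB}` of a coordinate metric on (an open subset of) `ℝ⁴`. -/
noncomputable def Christoffel (g : (Fin 4 → ℝ) → Matrix (Fin 4) (Fin 4) ℝ)
    (C A B : Fin 4) (p : Fin 4 → ℝ) : ℝ :=
  (1 / 2) * ∑ D : Fin 4, (g p)⁻¹ C D *
    (pd A (fun q => g q B D) p + pd B (fun q => g q A D) p - pd D (fun q => g q A B) p)

/-- Riemann curvature tensor `R^D_{CAB}` of a coordinate metric. -/
noncomputable def RiemannT (g : (Fin 4 → ℝ) → Matrix (Fin 4) (Fin 4) ℝ)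
    (D C A B : Fin 4) (p : Fin 4 → ℝ) : ℝ :=
  pd A (Christoffel g D B C) p - pd B (Christoffel g D A C) p +
    ∑ E : Fin 4, (Christoffel g D A E p * Christoffel g E B C p -
      Christoffel g D B E p * Christoffel g E A C p)

/-- Ricci tensor `Ric_{AB}` of a coordinate metric. -/
noncomputable def RicciT (g : (Fin 4 → ℝ) → Matrix (Fin 4) (Fin 4) ℝ)
    (A B : Fin 4) (p : Fin 4 → ℝ) : ℝ :=
  (∑ C : Fin 4, (pd C (Christoffel g C A B) p - pd A (Christoffel g C C B) p)) +
    ∑ C : Fin 4, ∑ D : Fin 4, (Christoffel g C C D p * Christoffel g D A B p -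
      Christoffel g C A D p * Christoffel g D C B p)

/-- `f` is differentiable at `p`, with partial derivatives `a`, `b`, `0`, `c`. -/
def J (f : (Fin 4 → ℝ) → ℝ) (p : Fin 4 → ℝ) (a b c : ℝ) : Prop :=
  DifferentiableAt ℝ f p ∧ pd 0 f p = a ∧ pd 1 f p = b ∧ pd 2 f p = 0 ∧ pd 3 f p = c

namespace J

variable {f f' : (Fin 4 → ℝ) → ℝ} {p : Fin 4 → ℝ} {a b c a' b' c' : ℝ}

theorem const (t : ℝ) : J (fun _ => t) p 0 0 0 := by
  refine ⟨by fun_prop, ?_, ?_, ?_, ?_⟩ <;> simp [pd]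

theorem add (h : J f p a b c) (h' : J f' p a' b' c') :
    J (fun q => f q + f' q) p (a + a') (b + b') (c + c') := by
  obtain ⟨h, h0, h1, h2, h3⟩ := h
  obtain ⟨k, k0, k1, k2, k3⟩ := h'
  unfold pd at *
  refine ⟨h.add k, ?_, ?_, ?_, ?_⟩ <;> unfold pd <;> rw [fderiv_fun_add h k] <;>
    simp [*]

theorem neg (h : J f p a b c) : J (fun q => - f q) p (-a) (-b) (-c) := by
  obtain ⟨h, h0, h1, h2, h3⟩ := h
  unfold pd at *
  refine ⟨h.neg, ?_, ?_, ?_, ?_⟩ <;> unfold pd <;> rw [fderiv_fun_neg] <;>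
    simp [*]

theorem sub (h : J f p a b c) (h' : J f' p a' b' c') :
    J (fun q => f q - f' q) p (a - a') (b - b') (c - c') := by
  obtain ⟨h, h0, h1, h2, h3⟩ := h
  obtain ⟨k, k0, k1, k2, k3⟩ := h'
  unfold pd at *
  refine ⟨h.sub k, ?_, ?_, ?_, ?_⟩ <;> unfold pd <;> rw [fderiv_fun_sub h k] <;>
    simp [*]

theorem mul (h : J f p a b c) (h' : J f' p a' b' c') :
    J (fun q => f q * f' q) p (f p * a' + f' p * a) (f p * b' + f' p * b)
      (f p * c' + f' p * c) := by
  obtain ⟨h, h0, h1, h2, h3⟩ := h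
  obtain ⟨k, k0, k1, k2, k3⟩ := h'
  unfold pd at *
  refine ⟨h.mul k, ?_, ?_, ?_, ?_⟩ <;> unfold pd <;> rw [fderiv_fun_mul h k] <;>
    simp [*]

theorem congr_val (h : J f p a b c) (ha : a = a') (hb : b = b') (hc : c = c') :
    J f p a' b' c' := by
  subst ha hb hc
  exact h

theorem sq (h : J f p a b c) :
    J (fun q => f q ^ 2) p (2 * f p * a) (2 * f p * b) (2 * f p * c) := by
  have := (h.mul h).congr_val (a' := 2 * f p * a) (b' := 2 * f p * b) (c' := 2 * f p * c)
    (by ring) (by ring) (by ring)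
  simpa only [pow_two] using this

theorem cube (h : J f p a b c) :
    J (fun q => f q ^ 3) p (3 * f p ^ 2 * a) (3 * f p ^ 2 * b) (3 * f p ^ 2 * c) := by
  have := (h.mul h.sq).congr_val (a' := 3 * f p ^ 2 * a) (b' := 3 * f p ^ 2 * b)
    (c' := 3 * f p ^ 2 * c) (by ring) (by ring) (by ring)
  have e : (fun q => f q ^ 3) = fun q => f q * f q ^ 2 := by
    funext q
    ring
  rw [e]
  exact this

theorem four (h : J f p a b c) :
    J (fun q => f q ^ 4) p (4 * f p ^ 3 * a) (4 * f p ^ 3 * b) (4 * f p ^ 3 * c) := by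
  have := (h.mul h.cube).congr_val (a' := 4 * f p ^ 3 * a) (b' := 4 * f p ^ 3 * b)
    (c' := 4 * f p ^ 3 * c) (by ring) (by ring) (by ring)
  have e : (fun q => f q ^ 4) = fun q => f q * f q ^ 3 := by
    funext q
    ring
  rw [e]
  exact this

theorem inv (h : J f p a b c) (h0 : f p ≠ 0) :
    J (fun q => (f q)⁻¹) p (-(f p)⁻¹ ^ 2 * a) (-(f p)⁻¹ ^ 2 * b) (-(f p)⁻¹ ^ 2 * c) := by
  obtain ⟨h, h1, h2, h3, h4⟩ := h
  have e : fderiv ℝ (fun q => (f q)⁻¹) p = (-(f p ^ 2)⁻¹) • fderiv ℝ f p :=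
    ((hasDerivAt_inv h0).comp_hasFDerivAt p h.hasFDerivAt).fderiv
  unfold pd at *
  refine ⟨h.inv h0, ?_, ?_, ?_, ?_⟩ <;> unfold pd <;> rw [e] <;> simp [*]

theorem congr_fun (h : J f p a b c) (e : f' =ᶠ[nhds p] f) : J f' p a b c := by
  obtain ⟨h, h1, h2, h3, h4⟩ := h
  unfold pd at *
  refine ⟨h.congr_of_eventuallyEq e, ?_, ?_, ?_, ?_⟩ <;> unfold pd <;> rw [e.fderiv_eq] <;>
    assumption

end J

/-- The symmetric matrix with the given entries on and above the diagonal. -/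
def ksym (a b c d e f k l m n : ℝ) : Matrix (Fin 4) (Fin 4) ℝ :=
  !![a, b, c, d; b, e, f, k; c, f, l, m; d, k, m, n]

/-- The metric in terms of its coefficients. -/
noncomputable def kmet (G H f10 f01 : ℝ) : Matrix (Fin 4) (Fin 4) ℝ :=
  ksym (G + H * f01 ^ 2) (-H * f01 * f10) (-H * f01 - (1/2) * f01) (-(1/2) * f01) (G + H * f10 ^
  2) (H * f10 + (1/2) * f10) ((1/2) * f10) (1 + H) ((1/2)) 0

/-- The inverse metric in terms of the coefficients. -/
noncomputable def kinv (W H f10 f01 : ℝ) : Matrix (Fin 4) (Fin 4) ℝ :=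
  ksym W 0 (W * f01) (-W * f01) W (-W * f10) (W * f10) (W * f01 ^ 2 + W * f10 ^ 2) (2 - W * f01
  ^ 2 - W * f10 ^ 2) (-4 - 4 * H + W * f01 ^ 2 + W * f10 ^ 2)

/-- The formal derivative of the metric. -/
noncomputable def kdmet (H f10 f01 dG dH df10 df01 : ℝ) : Matrix (Fin 4) (Fin 4) ℝ :=
  ksym (2 * H * df01 * f01 + dG + dH * f01 ^ 2) (-H * df01 * f10 - H * df10 * f01 - dH * f01 *
  f10) (-H * df01 - dH * f01 - (1/2) * df01) (-(1/2) * df01) (2 * H * df10 * f10 + dG + dH * f10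
  ^ 2) (H * df10 + dH * f10 + (1/2) * df10) ((1/2) * df10) dH 0 0

section

variable (W Gx Gy Gr H Hx Hy Hr f10 f01 f20 f11 f02
  dW dGx dGy dGr dH dHx dHy dHr df10 df01 df20 df11 df02 : ℝ)

/-- Christoffel symbol (0, 0, 0). -/
noncomputable def kg000 : ℝ :=
  (1/2) * Gr * W * f01 + (1/2) * Gx * W + (1/2) * Hr * W * f01 ^ 3 - (1/2) * Hx * W * f01 ^ 2

/-- Christoffel symbol (0, 0, 1). -/
noncomputable def kg001 : ℝ :=
  (1/2) * Gy * W + (1/2) * H * W * f01 * f02 + (1/2) * H * W * f01 * f20 - (1/2) * Hr * W * f01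
  ^ 2 * f10 + (1/2) * Hx * W * f01 * f10

/-- Christoffel symbol (0, 0, 2). -/
noncomputable def kg002 : ℝ :=
  -(1/2) * Hr * W * f01 ^ 2 + (1/2) * Hx * W * f01

/-- Christoffel symbol (0, 0, 3). -/
noncomputable def kg003 : ℝ :=
  (1/2) * Gr * W

/-- Christoffel symbol (0, 1, 1). -/
noncomputable def kg011 : ℝ :=
  (1/2) * Gr * W * f01 - (1/2) * Gx * W - H * W * f02 * f10 - H * W * f10 * f20 + (1/2) * Hr * W
  * f01 * f10 ^ 2 - (1/2) * Hx * W * f10 ^ 2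

/-- Christoffel symbol (0, 1, 2). -/
noncomputable def kg012 : ℝ :=
  -(1/2) * H * W * f02 - (1/2) * H * W * f20 + (1/2) * Hr * W * f01 * f10 - (1/2) * Hx * W * f10
  - (1/4) * W * f02 - (1/4) * W * f20

/-- Christoffel symbol (0, 1, 3). -/
noncomputable def kg013 : ℝ :=
  -(1/4) * W * f02 - (1/4) * W * f20

/-- Christoffel symbol (0, 2, 2). -/
noncomputable def kg022 : ℝ :=
  (1/2) * Hr * W * f01 - (1/2) * Hx * W

/-- Christoffel symbol (1, 0, 0). -/
noncomputable def kg100 : ℝ :=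
  -(1/2) * Gr * W * f10 - (1/2) * Gy * W - H * W * f01 * f02 - H * W * f01 * f20 - (1/2) * Hr *
  W * f01 ^ 2 * f10 - (1/2) * Hy * W * f01 ^ 2

/-- Christoffel symbol (1, 0, 1). -/
noncomputable def kg101 : ℝ :=
  (1/2) * Gx * W + (1/2) * H * W * f02 * f10 + (1/2) * H * W * f10 * f20 + (1/2) * Hr * W * f01
  * f10 ^ 2 + (1/2) * Hy * W * f01 * f10

/-- Christoffel symbol (1, 0, 2). -/
noncomputable def kg102 : ℝ :=
  (1/2) * H * W * f02 + (1/2) * H * W * f20 + (1/2) * Hr * W * f01 * f10 + (1/2) * Hy * W * f01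
  + (1/4) * W * f02 + (1/4) * W * f20

/-- Christoffel symbol (1, 0, 3). -/
noncomputable def kg103 : ℝ :=
  (1/4) * W * f02 + (1/4) * W * f20

/-- Christoffel symbol (1, 1, 1). -/
noncomputable def kg111 : ℝ :=
  -(1/2) * Gr * W * f10 + (1/2) * Gy * W - (1/2) * Hr * W * f10 ^ 3 - (1/2) * Hy * W * f10 ^ 2

/-- Christoffel symbol (1, 1, 2). -/
noncomputable def kg112 : ℝ :=
  -(1/2) * Hr * W * f10 ^ 2 - (1/2) * Hy * W * f10

/-- Christoffel symbol (1, 1, 3). -/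
noncomputable def kg113 : ℝ :=
  (1/2) * Gr * W

/-- Christoffel symbol (1, 2, 2). -/
noncomputable def kg122 : ℝ :=
  -(1/2) * Hr * W * f10 - (1/2) * Hy * W

/-- Christoffel symbol (2, 0, 0). -/
noncomputable def kg200 : ℝ :=
  -Gr + (1/2) * Gr * W * f01 ^ 2 + (1/2) * Gr * W * f10 ^ 2 + (1/2) * Gx * W * f01 + (1/2) * Gy
  * W * f10 + H * W * f01 * f02 * f10 + H * W * f01 * f10 * f20 + (1/2) * Hr * W * f01 ^ 2 * f10
  ^ 2 + (1/2) * Hr * W * f01 ^ 4 - Hr * f01 ^ 2 - (1/2) * Hx * W * f01 ^ 3 + (1/2) * Hy * W *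
  f01 ^ 2 * f10 - f11

/-- Christoffel symbol (2, 0, 1). -/
noncomputable def kg201 : ℝ :=
  -(1/2) * Gx * W * f10 + (1/2) * Gy * W * f01 + (1/2) * H * W * f01 ^ 2 * f02 + (1/2) * H * W *
  f01 ^ 2 * f20 - (1/2) * H * W * f02 * f10 ^ 2 - (1/2) * H * W * f10 ^ 2 * f20 - (1/2) * Hr * W
  * f01 * f10 ^ 3 - (1/2) * Hr * W * f01 ^ 3 * f10 + Hr * f01 * f10 + (1/2) * Hx * W * f01 ^ 2 *
  f10 - (1/2) * Hy * W * f01 * f10 ^ 2 - (1/2) * f02 + (1/2) * f20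

/-- Christoffel symbol (2, 0, 2). -/
noncomputable def kg202 : ℝ :=
  -(1/2) * H * W * f02 * f10 - (1/2) * H * W * f10 * f20 - (1/2) * Hr * W * f01 * f10 ^ 2 -
  (1/2) * Hr * W * f01 ^ 3 + Hr * f01 + (1/2) * Hx * W * f01 ^ 2 - (1/2) * Hy * W * f01 * f10 -
  (1/4) * W * f02 * f10 - (1/4) * W * f10 * f20

/-- Christoffel symbol (2, 0, 3). -/
noncomputable def kg203 : ℝ :=
  (1/2) * Gr * W * f01 - (1/4) * W * f02 * f10 - (1/4) * W * f10 * f20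

/-- Christoffel symbol (2, 1, 1). -/
noncomputable def kg211 : ℝ :=
  -Gr + (1/2) * Gr * W * f01 ^ 2 + (1/2) * Gr * W * f10 ^ 2 - (1/2) * Gx * W * f01 - (1/2) * Gy
  * W * f10 - H * W * f01 * f02 * f10 - H * W * f01 * f10 * f20 + (1/2) * Hr * W * f01 ^ 2 * f10
  ^ 2 + (1/2) * Hr * W * f10 ^ 4 - Hr * f10 ^ 2 - (1/2) * Hx * W * f01 * f10 ^ 2 + (1/2) * Hy *
  W * f10 ^ 3 + f11

/-- Christoffel symbol (2, 1, 2). -/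
noncomputable def kg212 : ℝ :=
  -(1/2) * H * W * f01 * f02 - (1/2) * H * W * f01 * f20 + (1/2) * Hr * W * f01 ^ 2 * f10 +
  (1/2) * Hr * W * f10 ^ 3 - Hr * f10 - (1/2) * Hx * W * f01 * f10 + (1/2) * Hy * W * f10 ^ 2 -
  (1/4) * W * f01 * f02 - (1/4) * W * f01 * f20

/-- Christoffel symbol (2, 1, 3). -/
noncomputable def kg213 : ℝ :=
  -(1/2) * Gr * W * f10 - (1/4) * W * f01 * f02 - (1/4) * W * f01 * f20

/-- Christoffel symbol (2, 2, 2). -/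
noncomputable def kg222 : ℝ :=
  -Hr + (1/2) * Hr * W * f01 ^ 2 + (1/2) * Hr * W * f10 ^ 2 - (1/2) * Hx * W * f01 + (1/2) * Hy
  * W * f10

/-- Christoffel symbol (3, 0, 0). -/
noncomputable def kg300 : ℝ :=
  2 * Gr + 2 * Gr * H - (1/2) * Gr * W * f01 ^ 2 - (1/2) * Gr * W * f10 ^ 2 - (1/2) * Gx * W *
  f01 - (1/2) * Gy * W * f10 + 2 * H * Hr * f01 ^ 2 - H * W * f01 * f02 * f10 - H * W * f01 *
  f10 * f20 - (1/2) * Hr * W * f01 ^ 2 * f10 ^ 2 - (1/2) * Hr * W * f01 ^ 4 + 2 * Hr * f01 ^ 2 +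
  (1/2) * Hx * W * f01 ^ 3 - 2 * Hx * f01 - (1/2) * Hy * W * f01 ^ 2 * f10 + f11

/-- Christoffel symbol (3, 0, 1). -/
noncomputable def kg301 : ℝ :=
  (1/2) * Gx * W * f10 - (1/2) * Gy * W * f01 - 2 * H * Hr * f01 * f10 - (1/2) * H * W * f01 ^ 2
  * f02 - (1/2) * H * W * f01 ^ 2 * f20 + (1/2) * H * W * f02 * f10 ^ 2 + (1/2) * H * W * f10 ^
  2 * f20 + (1/2) * Hr * W * f01 * f10 ^ 3 + (1/2) * Hr * W * f01 ^ 3 * f10 - 2 * Hr * f01 * f10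
  - (1/2) * Hx * W * f01 ^ 2 * f10 + Hx * f10 + (1/2) * Hy * W * f01 * f10 ^ 2 - Hy * f01 +
  (1/2) * f02 - (1/2) * f20

/-- Christoffel symbol (3, 0, 2). -/
noncomputable def kg302 : ℝ :=
  -2 * H * Hr * f01 + (1/2) * H * W * f02 * f10 + (1/2) * H * W * f10 * f20 + (1/2) * Hr * W *
  f01 * f10 ^ 2 + (1/2) * Hr * W * f01 ^ 3 - 2 * Hr * f01 + Hx - (1/2) * Hx * W * f01 ^ 2 +
  (1/2) * Hy * W * f01 * f10 + (1/4) * W * f02 * f10 + (1/4) * W * f10 * f20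

/-- Christoffel symbol (3, 0, 3). -/
noncomputable def kg303 : ℝ :=
  -(1/2) * Gr * W * f01 - Hr * f01 + (1/4) * W * f02 * f10 + (1/4) * W * f10 * f20

/-- Christoffel symbol (3, 1, 1). -/
noncomputable def kg311 : ℝ :=
  2 * Gr + 2 * Gr * H - (1/2) * Gr * W * f01 ^ 2 - (1/2) * Gr * W * f10 ^ 2 + (1/2) * Gx * W *
  f01 + (1/2) * Gy * W * f10 + 2 * H * Hr * f10 ^ 2 + H * W * f01 * f02 * f10 + H * W * f01 *
  f10 * f20 - (1/2) * Hr * W * f01 ^ 2 * f10 ^ 2 - (1/2) * Hr * W * f10 ^ 4 + 2 * Hr * f10 ^ 2 +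
  (1/2) * Hx * W * f01 * f10 ^ 2 - (1/2) * Hy * W * f10 ^ 3 + 2 * Hy * f10 - f11

/-- Christoffel symbol (3, 1, 2). -/
noncomputable def kg312 : ℝ :=
  2 * H * Hr * f10 + (1/2) * H * W * f01 * f02 + (1/2) * H * W * f01 * f20 - (1/2) * Hr * W *
  f01 ^ 2 * f10 - (1/2) * Hr * W * f10 ^ 3 + 2 * Hr * f10 + (1/2) * Hx * W * f01 * f10 + Hy -
  (1/2) * Hy * W * f10 ^ 2 + (1/4) * W * f01 * f02 + (1/4) * W * f01 * f20

/-- Christoffel symbol (3, 1, 3). -/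
noncomputable def kg313 : ℝ :=
  (1/2) * Gr * W * f10 + Hr * f10 + (1/4) * W * f01 * f02 + (1/4) * W * f01 * f20

/-- Christoffel symbol (3, 2, 2). -/
noncomputable def kg322 : ℝ :=
  2 * H * Hr + 2 * Hr - (1/2) * Hr * W * f01 ^ 2 - (1/2) * Hr * W * f10 ^ 2 + (1/2) * Hx * W *
  f01 - (1/2) * Hy * W * f10

/-- Christoffel symbol (3, 2, 3). -/
noncomputable def kg323 : ℝ :=
  Hr

/-- Christoffel symbol, as a table. -/
noncomputable def kgam (W Gx Gy Gr H Hx Hy Hr f10 f01 f20 f11 f02 : ℝ) : Fin 4 → Matrix (Fin 4) (Fin 4) ℝ := ![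
    ksym (kg000 W Gx Gr Hx Hr f01) (kg001 W Gy H Hx Hr f10 f01 f20 f02) (kg002 W Hx Hr f01)
    (kg003 W Gr) (kg011 W Gx Gr H Hx Hr f10 f01 f20 f02) (kg012 W H Hx Hr f10 f01 f20 f02)
    (kg013 W f20 f02) (kg022 W Hx Hr f01) 0 0,
    ksym (kg100 W Gy Gr H Hy Hr f10 f01 f20 f02) (kg101 W Gx H Hy Hr f10 f01 f20 f02) (kg102 W H
    Hy Hr f10 f01 f20 f02) (kg103 W f20 f02) (kg111 W Gy Gr Hy Hr f10) (kg112 W Hy Hr f10)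
    (kg113 W Gr) (kg122 W Hy Hr f10) 0 0,
    ksym (kg200 W Gx Gy Gr H Hx Hy Hr f10 f01 f20 f11 f02) (kg201 W Gx Gy H Hx Hy Hr f10 f01 f20
    f02) (kg202 W H Hx Hy Hr f10 f01 f20 f02) (kg203 W Gr f10 f01 f20 f02) (kg211 W Gx Gy Gr H
    Hx Hy Hr f10 f01 f20 f11 f02) (kg212 W H Hx Hy Hr f10 f01 f20 f02) (kg213 W Gr f10 f01 f20
    f02) (kg222 W Hx Hy Hr f10 f01) 0 0,
    ksym (kg300 W Gx Gy Gr H Hx Hy Hr f10 f01 f20 f11 f02) (kg301 W Gx Gy H Hx Hy Hr f10 f01 f20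
    f02) (kg302 W H Hx Hy Hr f10 f01 f20 f02) (kg303 W Gr Hr f10 f01 f20 f02) (kg311 W Gx Gy Gr
    H Hx Hy Hr f10 f01 f20 f11 f02) (kg312 W H Hx Hy Hr f10 f01 f20 f02) (kg313 W Gr Hr f10 f01
    f20 f02) (kg322 W H Hx Hy Hr f10 f01) (kg323 Hr) 0]

/-- Formal derivative of the Christoffel symbol (0, 0, 0). -/
noncomputable def kdg000 : ℝ :=
  (1/2) * Gr * W * df01 + (1/2) * Gr * dW * f01 + (1/2) * Gx * dW + (3/2) * Hr * W * df01 * f01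
  ^ 2 + (1/2) * Hr * dW * f01 ^ 3 - Hx * W * df01 * f01 - (1/2) * Hx * dW * f01 ^ 2 + (1/2) * W
  * dGr * f01 + (1/2) * W * dGx + (1/2) * W * dHr * f01 ^ 3 - (1/2) * W * dHx * f01 ^ 2

/-- Formal derivative of the Christoffel symbol (0, 0, 1). -/
noncomputable def kdg001 : ℝ :=
  (1/2) * Gy * dW + (1/2) * H * W * df01 * f02 + (1/2) * H * W * df01 * f20 + (1/2) * H * W *
  df02 * f01 + (1/2) * H * W * df20 * f01 + (1/2) * H * dW * f01 * f02 + (1/2) * H * dW * f01 *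
  f20 - Hr * W * df01 * f01 * f10 - (1/2) * Hr * W * df10 * f01 ^ 2 - (1/2) * Hr * dW * f01 ^ 2
  * f10 + (1/2) * Hx * W * df01 * f10 + (1/2) * Hx * W * df10 * f01 + (1/2) * Hx * dW * f01 *
  f10 + (1/2) * W * dGy + (1/2) * W * dH * f01 * f02 + (1/2) * W * dH * f01 * f20 - (1/2) * W *
  dHr * f01 ^ 2 * f10 + (1/2) * W * dHx * f01 * f10

/-- Formal derivative of the Christoffel symbol (0, 0, 2). -/
noncomputable def kdg002 : ℝ :=
  -Hr * W * df01 * f01 - (1/2) * Hr * dW * f01 ^ 2 + (1/2) * Hx * W * df01 + (1/2) * Hx * dW *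
  f01 - (1/2) * W * dHr * f01 ^ 2 + (1/2) * W * dHx * f01

/-- Formal derivative of the Christoffel symbol (0, 0, 3). -/
noncomputable def kdg003 : ℝ :=
  (1/2) * Gr * dW + (1/2) * W * dGr

/-- Formal derivative of the Christoffel symbol (0, 1, 1). -/
noncomputable def kdg011 : ℝ :=
  (1/2) * Gr * W * df01 + (1/2) * Gr * dW * f01 - (1/2) * Gx * dW - H * W * df02 * f10 - H * W *
  df10 * f02 - H * W * df10 * f20 - H * W * df20 * f10 - H * dW * f02 * f10 - H * dW * f10 * f20
  + (1/2) * Hr * W * df01 * f10 ^ 2 + Hr * W * df10 * f01 * f10 + (1/2) * Hr * dW * f01 * f10 ^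
  2 - Hx * W * df10 * f10 - (1/2) * Hx * dW * f10 ^ 2 + (1/2) * W * dGr * f01 - (1/2) * W * dGx
  - W * dH * f02 * f10 - W * dH * f10 * f20 + (1/2) * W * dHr * f01 * f10 ^ 2 - (1/2) * W * dHx
  * f10 ^ 2

/-- Formal derivative of the Christoffel symbol (0, 1, 2). -/
noncomputable def kdg012 : ℝ :=
  -(1/2) * H * W * df02 - (1/2) * H * W * df20 - (1/2) * H * dW * f02 - (1/2) * H * dW * f20 +
  (1/2) * Hr * W * df01 * f10 + (1/2) * Hr * W * df10 * f01 + (1/2) * Hr * dW * f01 * f10 -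
  (1/2) * Hx * W * df10 - (1/2) * Hx * dW * f10 - (1/2) * W * dH * f02 - (1/2) * W * dH * f20 +
  (1/2) * W * dHr * f01 * f10 - (1/2) * W * dHx * f10 - (1/4) * W * df02 - (1/4) * W * df20 -
  (1/4) * dW * f02 - (1/4) * dW * f20

/-- Formal derivative of the Christoffel symbol (0, 1, 3). -/
noncomputable def kdg013 : ℝ :=
  -(1/4) * W * df02 - (1/4) * W * df20 - (1/4) * dW * f02 - (1/4) * dW * f20

/-- Formal derivative of the Christoffel symbol (0, 2, 2). -/
noncomputable def kdg022 : ℝ :=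
  (1/2) * Hr * W * df01 + (1/2) * Hr * dW * f01 - (1/2) * Hx * dW + (1/2) * W * dHr * f01 -
  (1/2) * W * dHx

/-- Formal derivative of the Christoffel symbol (1, 0, 0). -/
noncomputable def kdg100 : ℝ :=
  -(1/2) * Gr * W * df10 - (1/2) * Gr * dW * f10 - (1/2) * Gy * dW - H * W * df01 * f02 - H * W
  * df01 * f20 - H * W * df02 * f01 - H * W * df20 * f01 - H * dW * f01 * f02 - H * dW * f01 *
  f20 - Hr * W * df01 * f01 * f10 - (1/2) * Hr * W * df10 * f01 ^ 2 - (1/2) * Hr * dW * f01 ^ 2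
  * f10 - Hy * W * df01 * f01 - (1/2) * Hy * dW * f01 ^ 2 - (1/2) * W * dGr * f10 - (1/2) * W *
  dGy - W * dH * f01 * f02 - W * dH * f01 * f20 - (1/2) * W * dHr * f01 ^ 2 * f10 - (1/2) * W *
  dHy * f01 ^ 2

/-- Formal derivative of the Christoffel symbol (1, 0, 1). -/
noncomputable def kdg101 : ℝ :=
  (1/2) * Gx * dW + (1/2) * H * W * df02 * f10 + (1/2) * H * W * df10 * f02 + (1/2) * H * W *
  df10 * f20 + (1/2) * H * W * df20 * f10 + (1/2) * H * dW * f02 * f10 + (1/2) * H * dW * f10 *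
  f20 + (1/2) * Hr * W * df01 * f10 ^ 2 + Hr * W * df10 * f01 * f10 + (1/2) * Hr * dW * f01 *
  f10 ^ 2 + (1/2) * Hy * W * df01 * f10 + (1/2) * Hy * W * df10 * f01 + (1/2) * Hy * dW * f01 *
  f10 + (1/2) * W * dGx + (1/2) * W * dH * f02 * f10 + (1/2) * W * dH * f10 * f20 + (1/2) * W *
  dHr * f01 * f10 ^ 2 + (1/2) * W * dHy * f01 * f10

/-- Formal derivative of the Christoffel symbol (1, 0, 2). -/
noncomputable def kdg102 : ℝ :=
  (1/2) * H * W * df02 + (1/2) * H * W * df20 + (1/2) * H * dW * f02 + (1/2) * H * dW * f20 +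
  (1/2) * Hr * W * df01 * f10 + (1/2) * Hr * W * df10 * f01 + (1/2) * Hr * dW * f01 * f10 +
  (1/2) * Hy * W * df01 + (1/2) * Hy * dW * f01 + (1/2) * W * dH * f02 + (1/2) * W * dH * f20 +
  (1/2) * W * dHr * f01 * f10 + (1/2) * W * dHy * f01 + (1/4) * W * df02 + (1/4) * W * df20 +
  (1/4) * dW * f02 + (1/4) * dW * f20

/-- Formal derivative of the Christoffel symbol (1, 0, 3). -/
noncomputable def kdg103 : ℝ :=
  (1/4) * W * df02 + (1/4) * W * df20 + (1/4) * dW * f02 + (1/4) * dW * f20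

/-- Formal derivative of the Christoffel symbol (1, 1, 1). -/
noncomputable def kdg111 : ℝ :=
  -(1/2) * Gr * W * df10 - (1/2) * Gr * dW * f10 + (1/2) * Gy * dW - (3/2) * Hr * W * df10 * f10
  ^ 2 - (1/2) * Hr * dW * f10 ^ 3 - Hy * W * df10 * f10 - (1/2) * Hy * dW * f10 ^ 2 - (1/2) * W
  * dGr * f10 + (1/2) * W * dGy - (1/2) * W * dHr * f10 ^ 3 - (1/2) * W * dHy * f10 ^ 2

/-- Formal derivative of the Christoffel symbol (1, 1, 2). -/
noncomputable def kdg112 : ℝ :=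
  -Hr * W * df10 * f10 - (1/2) * Hr * dW * f10 ^ 2 - (1/2) * Hy * W * df10 - (1/2) * Hy * dW *
  f10 - (1/2) * W * dHr * f10 ^ 2 - (1/2) * W * dHy * f10

/-- Formal derivative of the Christoffel symbol (1, 1, 3). -/
noncomputable def kdg113 : ℝ :=
  (1/2) * Gr * dW + (1/2) * W * dGr

/-- Formal derivative of the Christoffel symbol (1, 2, 2). -/
noncomputable def kdg122 : ℝ :=
  -(1/2) * Hr * W * df10 - (1/2) * Hr * dW * f10 - (1/2) * Hy * dW - (1/2) * W * dHr * f10 -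
  (1/2) * W * dHy

/-- Formal derivative of the Christoffel symbol (2, 0, 0). -/
noncomputable def kdg200 : ℝ :=
  Gr * W * df01 * f01 + Gr * W * df10 * f10 + (1/2) * Gr * dW * f01 ^ 2 + (1/2) * Gr * dW * f10
  ^ 2 + (1/2) * Gx * W * df01 + (1/2) * Gx * dW * f01 + (1/2) * Gy * W * df10 + (1/2) * Gy * dW
  * f10 + H * W * df01 * f02 * f10 + H * W * df01 * f10 * f20 + H * W * df02 * f01 * f10 + H * W
  * df10 * f01 * f02 + H * W * df10 * f01 * f20 + H * W * df20 * f01 * f10 + H * dW * f01 * f02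
  * f10 + H * dW * f01 * f10 * f20 + Hr * W * df01 * f01 * f10 ^ 2 + 2 * Hr * W * df01 * f01 ^ 3
  + Hr * W * df10 * f01 ^ 2 * f10 + (1/2) * Hr * dW * f01 ^ 2 * f10 ^ 2 + (1/2) * Hr * dW * f01
  ^ 4 - 2 * Hr * df01 * f01 - (3/2) * Hx * W * df01 * f01 ^ 2 - (1/2) * Hx * dW * f01 ^ 3 + Hy *
  W * df01 * f01 * f10 + (1/2) * Hy * W * df10 * f01 ^ 2 + (1/2) * Hy * dW * f01 ^ 2 * f10 +
  (1/2) * W * dGr * f01 ^ 2 + (1/2) * W * dGr * f10 ^ 2 + (1/2) * W * dGx * f01 + (1/2) * W *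
  dGy * f10 + W * dH * f01 * f02 * f10 + W * dH * f01 * f10 * f20 + (1/2) * W * dHr * f01 ^ 2 *
  f10 ^ 2 + (1/2) * W * dHr * f01 ^ 4 - (1/2) * W * dHx * f01 ^ 3 + (1/2) * W * dHy * f01 ^ 2 *
  f10 - dGr - dHr * f01 ^ 2 - df11

/-- Formal derivative of the Christoffel symbol (2, 0, 1). -/
noncomputable def kdg201 : ℝ :=
  -(1/2) * Gx * W * df10 - (1/2) * Gx * dW * f10 + (1/2) * Gy * W * df01 + (1/2) * Gy * dW * f01
  + H * W * df01 * f01 * f02 + H * W * df01 * f01 * f20 + (1/2) * H * W * df02 * f01 ^ 2 - (1/2)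
  * H * W * df02 * f10 ^ 2 - H * W * df10 * f02 * f10 - H * W * df10 * f10 * f20 + (1/2) * H * W
  * df20 * f01 ^ 2 - (1/2) * H * W * df20 * f10 ^ 2 + (1/2) * H * dW * f01 ^ 2 * f02 + (1/2) * H
  * dW * f01 ^ 2 * f20 - (1/2) * H * dW * f02 * f10 ^ 2 - (1/2) * H * dW * f10 ^ 2 * f20 - (3/2)
  * Hr * W * df01 * f01 ^ 2 * f10 - (1/2) * Hr * W * df01 * f10 ^ 3 - (3/2) * Hr * W * df10 *
  f01 * f10 ^ 2 - (1/2) * Hr * W * df10 * f01 ^ 3 - (1/2) * Hr * dW * f01 * f10 ^ 3 - (1/2) * Hr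
  * dW * f01 ^ 3 * f10 + Hr * df01 * f10 + Hr * df10 * f01 + Hx * W * df01 * f01 * f10 + (1/2) *
  Hx * W * df10 * f01 ^ 2 + (1/2) * Hx * dW * f01 ^ 2 * f10 - (1/2) * Hy * W * df01 * f10 ^ 2 -
  Hy * W * df10 * f01 * f10 - (1/2) * Hy * dW * f01 * f10 ^ 2 - (1/2) * W * dGx * f10 + (1/2) *
  W * dGy * f01 + (1/2) * W * dH * f01 ^ 2 * f02 + (1/2) * W * dH * f01 ^ 2 * f20 - (1/2) * W *
  dH * f02 * f10 ^ 2 - (1/2) * W * dH * f10 ^ 2 * f20 - (1/2) * W * dHr * f01 * f10 ^ 3 - (1/2)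
  * W * dHr * f01 ^ 3 * f10 + (1/2) * W * dHx * f01 ^ 2 * f10 - (1/2) * W * dHy * f01 * f10 ^ 2
  + dHr * f01 * f10 - (1/2) * df02 + (1/2) * df20

/-- Formal derivative of the Christoffel symbol (2, 0, 2). -/
noncomputable def kdg202 : ℝ :=
  -(1/2) * H * W * df02 * f10 - (1/2) * H * W * df10 * f02 - (1/2) * H * W * df10 * f20 - (1/2)
  * H * W * df20 * f10 - (1/2) * H * dW * f02 * f10 - (1/2) * H * dW * f10 * f20 - (3/2) * Hr *
  W * df01 * f01 ^ 2 - (1/2) * Hr * W * df01 * f10 ^ 2 - Hr * W * df10 * f01 * f10 - (1/2) * Hr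
  * dW * f01 * f10 ^ 2 - (1/2) * Hr * dW * f01 ^ 3 + Hr * df01 + Hx * W * df01 * f01 + (1/2) *
  Hx * dW * f01 ^ 2 - (1/2) * Hy * W * df01 * f10 - (1/2) * Hy * W * df10 * f01 - (1/2) * Hy *
  dW * f01 * f10 - (1/2) * W * dH * f02 * f10 - (1/2) * W * dH * f10 * f20 - (1/2) * W * dHr *
  f01 * f10 ^ 2 - (1/2) * W * dHr * f01 ^ 3 + (1/2) * W * dHx * f01 ^ 2 - (1/2) * W * dHy * f01
  * f10 - (1/4) * W * df02 * f10 - (1/4) * W * df10 * f02 - (1/4) * W * df10 * f20 - (1/4) * W *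
  df20 * f10 + dHr * f01 - (1/4) * dW * f02 * f10 - (1/4) * dW * f10 * f20

/-- Formal derivative of the Christoffel symbol (2, 0, 3). -/
noncomputable def kdg203 : ℝ :=
  (1/2) * Gr * W * df01 + (1/2) * Gr * dW * f01 + (1/2) * W * dGr * f01 - (1/4) * W * df02 * f10
  - (1/4) * W * df10 * f02 - (1/4) * W * df10 * f20 - (1/4) * W * df20 * f10 - (1/4) * dW * f02
  * f10 - (1/4) * dW * f10 * f20

/-- Formal derivative of the Christoffel symbol (2, 1, 1). -/
noncomputable def kdg211 : ℝ :=
  Gr * W * df01 * f01 + Gr * W * df10 * f10 + (1/2) * Gr * dW * f01 ^ 2 + (1/2) * Gr * dW * f10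
  ^ 2 - (1/2) * Gx * W * df01 - (1/2) * Gx * dW * f01 - (1/2) * Gy * W * df10 - (1/2) * Gy * dW
  * f10 - H * W * df01 * f02 * f10 - H * W * df01 * f10 * f20 - H * W * df02 * f01 * f10 - H * W
  * df10 * f01 * f02 - H * W * df10 * f01 * f20 - H * W * df20 * f01 * f10 - H * dW * f01 * f02
  * f10 - H * dW * f01 * f10 * f20 + Hr * W * df01 * f01 * f10 ^ 2 + Hr * W * df10 * f01 ^ 2 *
  f10 + 2 * Hr * W * df10 * f10 ^ 3 + (1/2) * Hr * dW * f01 ^ 2 * f10 ^ 2 + (1/2) * Hr * dW *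
  f10 ^ 4 - 2 * Hr * df10 * f10 - (1/2) * Hx * W * df01 * f10 ^ 2 - Hx * W * df10 * f01 * f10 -
  (1/2) * Hx * dW * f01 * f10 ^ 2 + (3/2) * Hy * W * df10 * f10 ^ 2 + (1/2) * Hy * dW * f10 ^ 3
  + (1/2) * W * dGr * f01 ^ 2 + (1/2) * W * dGr * f10 ^ 2 - (1/2) * W * dGx * f01 - (1/2) * W *
  dGy * f10 - W * dH * f01 * f02 * f10 - W * dH * f01 * f10 * f20 + (1/2) * W * dHr * f01 ^ 2 *
  f10 ^ 2 + (1/2) * W * dHr * f10 ^ 4 - (1/2) * W * dHx * f01 * f10 ^ 2 + (1/2) * W * dHy * f10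
  ^ 3 - dGr - dHr * f10 ^ 2 + df11

/-- Formal derivative of the Christoffel symbol (2, 1, 2). -/
noncomputable def kdg212 : ℝ :=
  -(1/2) * H * W * df01 * f02 - (1/2) * H * W * df01 * f20 - (1/2) * H * W * df02 * f01 - (1/2)
  * H * W * df20 * f01 - (1/2) * H * dW * f01 * f02 - (1/2) * H * dW * f01 * f20 + Hr * W * df01
  * f01 * f10 + (1/2) * Hr * W * df10 * f01 ^ 2 + (3/2) * Hr * W * df10 * f10 ^ 2 + (1/2) * Hr *
  dW * f01 ^ 2 * f10 + (1/2) * Hr * dW * f10 ^ 3 - Hr * df10 - (1/2) * Hx * W * df01 * f10 -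
  (1/2) * Hx * W * df10 * f01 - (1/2) * Hx * dW * f01 * f10 + Hy * W * df10 * f10 + (1/2) * Hy *
  dW * f10 ^ 2 - (1/2) * W * dH * f01 * f02 - (1/2) * W * dH * f01 * f20 + (1/2) * W * dHr * f01
  ^ 2 * f10 + (1/2) * W * dHr * f10 ^ 3 - (1/2) * W * dHx * f01 * f10 + (1/2) * W * dHy * f10 ^
  2 - (1/4) * W * df01 * f02 - (1/4) * W * df01 * f20 - (1/4) * W * df02 * f01 - (1/4) * W *
  df20 * f01 - dHr * f10 - (1/4) * dW * f01 * f02 - (1/4) * dW * f01 * f20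

/-- Formal derivative of the Christoffel symbol (2, 1, 3). -/
noncomputable def kdg213 : ℝ :=
  -(1/2) * Gr * W * df10 - (1/2) * Gr * dW * f10 - (1/2) * W * dGr * f10 - (1/4) * W * df01 *
  f02 - (1/4) * W * df01 * f20 - (1/4) * W * df02 * f01 - (1/4) * W * df20 * f01 - (1/4) * dW *
  f01 * f02 - (1/4) * dW * f01 * f20

/-- Formal derivative of the Christoffel symbol (2, 2, 2). -/
noncomputable def kdg222 : ℝ :=
  Hr * W * df01 * f01 + Hr * W * df10 * f10 + (1/2) * Hr * dW * f01 ^ 2 + (1/2) * Hr * dW * f10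
  ^ 2 - (1/2) * Hx * W * df01 - (1/2) * Hx * dW * f01 + (1/2) * Hy * W * df10 + (1/2) * Hy * dW
  * f10 + (1/2) * W * dHr * f01 ^ 2 + (1/2) * W * dHr * f10 ^ 2 - (1/2) * W * dHx * f01 + (1/2)
  * W * dHy * f10 - dHr

/-- Formal derivative of the Christoffel symbol (3, 0, 0). -/
noncomputable def kdg300 : ℝ :=
  -Gr * W * df01 * f01 - Gr * W * df10 * f10 + 2 * Gr * dH - (1/2) * Gr * dW * f01 ^ 2 - (1/2) *
  Gr * dW * f10 ^ 2 - (1/2) * Gx * W * df01 - (1/2) * Gx * dW * f01 - (1/2) * Gy * W * df10 -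
  (1/2) * Gy * dW * f10 + 4 * H * Hr * df01 * f01 - H * W * df01 * f02 * f10 - H * W * df01 *
  f10 * f20 - H * W * df02 * f01 * f10 - H * W * df10 * f01 * f02 - H * W * df10 * f01 * f20 - H
  * W * df20 * f01 * f10 + 2 * H * dGr + 2 * H * dHr * f01 ^ 2 - H * dW * f01 * f02 * f10 - H *
  dW * f01 * f10 * f20 - Hr * W * df01 * f01 * f10 ^ 2 - 2 * Hr * W * df01 * f01 ^ 3 - Hr * W *
  df10 * f01 ^ 2 * f10 + 2 * Hr * dH * f01 ^ 2 - (1/2) * Hr * dW * f01 ^ 2 * f10 ^ 2 - (1/2) *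
  Hr * dW * f01 ^ 4 + 4 * Hr * df01 * f01 + (3/2) * Hx * W * df01 * f01 ^ 2 + (1/2) * Hx * dW *
  f01 ^ 3 - 2 * Hx * df01 - Hy * W * df01 * f01 * f10 - (1/2) * Hy * W * df10 * f01 ^ 2 - (1/2)
  * Hy * dW * f01 ^ 2 * f10 - (1/2) * W * dGr * f01 ^ 2 - (1/2) * W * dGr * f10 ^ 2 - (1/2) * W
  * dGx * f01 - (1/2) * W * dGy * f10 - W * dH * f01 * f02 * f10 - W * dH * f01 * f10 * f20 -
  (1/2) * W * dHr * f01 ^ 2 * f10 ^ 2 - (1/2) * W * dHr * f01 ^ 4 + (1/2) * W * dHx * f01 ^ 3 -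
  (1/2) * W * dHy * f01 ^ 2 * f10 + 2 * dGr + 2 * dHr * f01 ^ 2 - 2 * dHx * f01 + df11

/-- Formal derivative of the Christoffel symbol (3, 0, 1). -/
noncomputable def kdg301 : ℝ :=
  (1/2) * Gx * W * df10 + (1/2) * Gx * dW * f10 - (1/2) * Gy * W * df01 - (1/2) * Gy * dW * f01
  - 2 * H * Hr * df01 * f10 - 2 * H * Hr * df10 * f01 - H * W * df01 * f01 * f02 - H * W * df01
  * f01 * f20 - (1/2) * H * W * df02 * f01 ^ 2 + (1/2) * H * W * df02 * f10 ^ 2 + H * W * df10 *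
  f02 * f10 + H * W * df10 * f10 * f20 - (1/2) * H * W * df20 * f01 ^ 2 + (1/2) * H * W * df20 *
  f10 ^ 2 - 2 * H * dHr * f01 * f10 - (1/2) * H * dW * f01 ^ 2 * f02 - (1/2) * H * dW * f01 ^ 2
  * f20 + (1/2) * H * dW * f02 * f10 ^ 2 + (1/2) * H * dW * f10 ^ 2 * f20 + (3/2) * Hr * W *
  df01 * f01 ^ 2 * f10 + (1/2) * Hr * W * df01 * f10 ^ 3 + (3/2) * Hr * W * df10 * f01 * f10 ^ 2
  + (1/2) * Hr * W * df10 * f01 ^ 3 - 2 * Hr * dH * f01 * f10 + (1/2) * Hr * dW * f01 * f10 ^ 3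
  + (1/2) * Hr * dW * f01 ^ 3 * f10 - 2 * Hr * df01 * f10 - 2 * Hr * df10 * f01 - Hx * W * df01
  * f01 * f10 - (1/2) * Hx * W * df10 * f01 ^ 2 - (1/2) * Hx * dW * f01 ^ 2 * f10 + Hx * df10 +
  (1/2) * Hy * W * df01 * f10 ^ 2 + Hy * W * df10 * f01 * f10 + (1/2) * Hy * dW * f01 * f10 ^ 2
  - Hy * df01 + (1/2) * W * dGx * f10 - (1/2) * W * dGy * f01 - (1/2) * W * dH * f01 ^ 2 * f02 -
  (1/2) * W * dH * f01 ^ 2 * f20 + (1/2) * W * dH * f02 * f10 ^ 2 + (1/2) * W * dH * f10 ^ 2 *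
  f20 + (1/2) * W * dHr * f01 * f10 ^ 3 + (1/2) * W * dHr * f01 ^ 3 * f10 - (1/2) * W * dHx *
  f01 ^ 2 * f10 + (1/2) * W * dHy * f01 * f10 ^ 2 - 2 * dHr * f01 * f10 + dHx * f10 - dHy * f01
  + (1/2) * df02 - (1/2) * df20

/-- Formal derivative of the Christoffel symbol (3, 0, 2). -/
noncomputable def kdg302 : ℝ :=
  -2 * H * Hr * df01 + (1/2) * H * W * df02 * f10 + (1/2) * H * W * df10 * f02 + (1/2) * H * W *
  df10 * f20 + (1/2) * H * W * df20 * f10 - 2 * H * dHr * f01 + (1/2) * H * dW * f02 * f10 +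
  (1/2) * H * dW * f10 * f20 + (3/2) * Hr * W * df01 * f01 ^ 2 + (1/2) * Hr * W * df01 * f10 ^ 2
  + Hr * W * df10 * f01 * f10 - 2 * Hr * dH * f01 + (1/2) * Hr * dW * f01 * f10 ^ 2 + (1/2) * Hr
  * dW * f01 ^ 3 - 2 * Hr * df01 - Hx * W * df01 * f01 - (1/2) * Hx * dW * f01 ^ 2 + (1/2) * Hy
  * W * df01 * f10 + (1/2) * Hy * W * df10 * f01 + (1/2) * Hy * dW * f01 * f10 + (1/2) * W * dH
  * f02 * f10 + (1/2) * W * dH * f10 * f20 + (1/2) * W * dHr * f01 * f10 ^ 2 + (1/2) * W * dHr *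
  f01 ^ 3 - (1/2) * W * dHx * f01 ^ 2 + (1/2) * W * dHy * f01 * f10 + (1/4) * W * df02 * f10 +
  (1/4) * W * df10 * f02 + (1/4) * W * df10 * f20 + (1/4) * W * df20 * f10 - 2 * dHr * f01 + dHx
  + (1/4) * dW * f02 * f10 + (1/4) * dW * f10 * f20

/-- Formal derivative of the Christoffel symbol (3, 0, 3). -/
noncomputable def kdg303 : ℝ :=
  -(1/2) * Gr * W * df01 - (1/2) * Gr * dW * f01 - Hr * df01 - (1/2) * W * dGr * f01 + (1/4) * W
  * df02 * f10 + (1/4) * W * df10 * f02 + (1/4) * W * df10 * f20 + (1/4) * W * df20 * f10 - dHr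
  * f01 + (1/4) * dW * f02 * f10 + (1/4) * dW * f10 * f20

/-- Formal derivative of the Christoffel symbol (3, 1, 1). -/
noncomputable def kdg311 : ℝ :=
  -Gr * W * df01 * f01 - Gr * W * df10 * f10 + 2 * Gr * dH - (1/2) * Gr * dW * f01 ^ 2 - (1/2) *
  Gr * dW * f10 ^ 2 + (1/2) * Gx * W * df01 + (1/2) * Gx * dW * f01 + (1/2) * Gy * W * df10 +
  (1/2) * Gy * dW * f10 + 4 * H * Hr * df10 * f10 + H * W * df01 * f02 * f10 + H * W * df01 *
  f10 * f20 + H * W * df02 * f01 * f10 + H * W * df10 * f01 * f02 + H * W * df10 * f01 * f20 + H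
  * W * df20 * f01 * f10 + 2 * H * dGr + 2 * H * dHr * f10 ^ 2 + H * dW * f01 * f02 * f10 + H *
  dW * f01 * f10 * f20 - Hr * W * df01 * f01 * f10 ^ 2 - Hr * W * df10 * f01 ^ 2 * f10 - 2 * Hr
  * W * df10 * f10 ^ 3 + 2 * Hr * dH * f10 ^ 2 - (1/2) * Hr * dW * f01 ^ 2 * f10 ^ 2 - (1/2) *
  Hr * dW * f10 ^ 4 + 4 * Hr * df10 * f10 + (1/2) * Hx * W * df01 * f10 ^ 2 + Hx * W * df10 *
  f01 * f10 + (1/2) * Hx * dW * f01 * f10 ^ 2 - (3/2) * Hy * W * df10 * f10 ^ 2 - (1/2) * Hy *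
  dW * f10 ^ 3 + 2 * Hy * df10 - (1/2) * W * dGr * f01 ^ 2 - (1/2) * W * dGr * f10 ^ 2 + (1/2) *
  W * dGx * f01 + (1/2) * W * dGy * f10 + W * dH * f01 * f02 * f10 + W * dH * f01 * f10 * f20 -
  (1/2) * W * dHr * f01 ^ 2 * f10 ^ 2 - (1/2) * W * dHr * f10 ^ 4 + (1/2) * W * dHx * f01 * f10
  ^ 2 - (1/2) * W * dHy * f10 ^ 3 + 2 * dGr + 2 * dHr * f10 ^ 2 + 2 * dHy * f10 - df11

/-- Formal derivative of the Christoffel symbol (3, 1, 2). -/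
noncomputable def kdg312 : ℝ :=
  2 * H * Hr * df10 + (1/2) * H * W * df01 * f02 + (1/2) * H * W * df01 * f20 + (1/2) * H * W *
  df02 * f01 + (1/2) * H * W * df20 * f01 + 2 * H * dHr * f10 + (1/2) * H * dW * f01 * f02 +
  (1/2) * H * dW * f01 * f20 - Hr * W * df01 * f01 * f10 - (1/2) * Hr * W * df10 * f01 ^ 2 -
  (3/2) * Hr * W * df10 * f10 ^ 2 + 2 * Hr * dH * f10 - (1/2) * Hr * dW * f01 ^ 2 * f10 - (1/2)
  * Hr * dW * f10 ^ 3 + 2 * Hr * df10 + (1/2) * Hx * W * df01 * f10 + (1/2) * Hx * W * df10 *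
  f01 + (1/2) * Hx * dW * f01 * f10 - Hy * W * df10 * f10 - (1/2) * Hy * dW * f10 ^ 2 + (1/2) *
  W * dH * f01 * f02 + (1/2) * W * dH * f01 * f20 - (1/2) * W * dHr * f01 ^ 2 * f10 - (1/2) * W
  * dHr * f10 ^ 3 + (1/2) * W * dHx * f01 * f10 - (1/2) * W * dHy * f10 ^ 2 + (1/4) * W * df01 *
  f02 + (1/4) * W * df01 * f20 + (1/4) * W * df02 * f01 + (1/4) * W * df20 * f01 + 2 * dHr * f10
  + dHy + (1/4) * dW * f01 * f02 + (1/4) * dW * f01 * f20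

/-- Formal derivative of the Christoffel symbol (3, 1, 3). -/
noncomputable def kdg313 : ℝ :=
  (1/2) * Gr * W * df10 + (1/2) * Gr * dW * f10 + Hr * df10 + (1/2) * W * dGr * f10 + (1/4) * W
  * df01 * f02 + (1/4) * W * df01 * f20 + (1/4) * W * df02 * f01 + (1/4) * W * df20 * f01 + dHr
  * f10 + (1/4) * dW * f01 * f02 + (1/4) * dW * f01 * f20

/-- Formal derivative of the Christoffel symbol (3, 2, 2). -/
noncomputable def kdg322 : ℝ :=
  2 * H * dHr - Hr * W * df01 * f01 - Hr * W * df10 * f10 + 2 * Hr * dH - (1/2) * Hr * dW * f01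
  ^ 2 - (1/2) * Hr * dW * f10 ^ 2 + (1/2) * Hx * W * df01 + (1/2) * Hx * dW * f01 - (1/2) * Hy *
  W * df10 - (1/2) * Hy * dW * f10 - (1/2) * W * dHr * f01 ^ 2 - (1/2) * W * dHr * f10 ^ 2 +
  (1/2) * W * dHx * f01 - (1/2) * W * dHy * f10 + 2 * dHr

/-- Formal derivative of the Christoffel symbol (3, 2, 3). -/
noncomputable def kdg323 : ℝ :=
  dHr

/-- Formal derivative of the Christoffel symbol, as a table. -/
noncomputable def kdgam (W Gx Gy Gr H Hx Hy Hr f10 f01 f20 f11 f02 dW dGx dGy dGr dH dHx dHy dHr df10 df01 df20 df11 df02 : ℝ) : Fin 4 → Matrix (Fin 4) (Fin 4) ℝ := ![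
    ksym (kdg000 W Gx Gr Hx Hr f01 dW dGx dGr dHx dHr df01) (kdg001 W Gy H Hx Hr f10 f01 f20 f02
    dW dGy dH dHx dHr df10 df01 df20 df02) (kdg002 W Hx Hr f01 dW dHx dHr df01) (kdg003 W Gr dW
    dGr) (kdg011 W Gx Gr H Hx Hr f10 f01 f20 f02 dW dGx dGr dH dHx dHr df10 df01 df20 df02)
    (kdg012 W H Hx Hr f10 f01 f20 f02 dW dH dHx dHr df10 df01 df20 df02) (kdg013 W f20 f02 dW
    df20 df02) (kdg022 W Hx Hr f01 dW dHx dHr df01) 0 0,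
    ksym (kdg100 W Gy Gr H Hy Hr f10 f01 f20 f02 dW dGy dGr dH dHy dHr df10 df01 df20 df02)
    (kdg101 W Gx H Hy Hr f10 f01 f20 f02 dW dGx dH dHy dHr df10 df01 df20 df02) (kdg102 W H Hy
    Hr f10 f01 f20 f02 dW dH dHy dHr df10 df01 df20 df02) (kdg103 W f20 f02 dW df20 df02)
    (kdg111 W Gy Gr Hy Hr f10 dW dGy dGr dHy dHr df10) (kdg112 W Hy Hr f10 dW dHy dHr df10)
    (kdg113 W Gr dW dGr) (kdg122 W Hy Hr f10 dW dHy dHr df10) 0 0,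
    ksym (kdg200 W Gx Gy Gr H Hx Hy Hr f10 f01 f20 f02 dW dGx dGy dGr dH dHx dHy dHr df10 df01
    df20 df11 df02) (kdg201 W Gx Gy H Hx Hy Hr f10 f01 f20 f02 dW dGx dGy dH dHx dHy dHr df10
    df01 df20 df02) (kdg202 W H Hx Hy Hr f10 f01 f20 f02 dW dH dHx dHy dHr df10 df01 df20 df02)
    (kdg203 W Gr f10 f01 f20 f02 dW dGr df10 df01 df20 df02) (kdg211 W Gx Gy Gr H Hx Hy Hr f10
    f01 f20 f02 dW dGx dGy dGr dH dHx dHy dHr df10 df01 df20 df11 df02) (kdg212 W H Hx Hy Hr f10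
    f01 f20 f02 dW dH dHx dHy dHr df10 df01 df20 df02) (kdg213 W Gr f10 f01 f20 f02 dW dGr df10
    df01 df20 df02) (kdg222 W Hx Hy Hr f10 f01 dW dHx dHy dHr df10 df01) 0 0,
    ksym (kdg300 W Gx Gy Gr H Hx Hy Hr f10 f01 f20 f02 dW dGx dGy dGr dH dHx dHy dHr df10 df01
    df20 df11 df02) (kdg301 W Gx Gy H Hx Hy Hr f10 f01 f20 f02 dW dGx dGy dH dHx dHy dHr df10
    df01 df20 df02) (kdg302 W H Hx Hy Hr f10 f01 f20 f02 dW dH dHx dHy dHr df10 df01 df20 df02)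
    (kdg303 W Gr Hr f10 f01 f20 f02 dW dGr dHr df10 df01 df20 df02) (kdg311 W Gx Gy Gr H Hx Hy
    Hr f10 f01 f20 f02 dW dGx dGy dGr dH dHx dHy dHr df10 df01 df20 df11 df02) (kdg312 W H Hx Hy
    Hr f10 f01 f20 f02 dW dH dHx dHy dHr df10 df01 df20 df02) (kdg313 W Gr Hr f10 f01 f20 f02 dW
    dGr dHr df10 df01 df20 df02) (kdg322 W H Hx Hy Hr f10 f01 dW dH dHx dHy dHr df10 df01)
    (kdg323 dHr) 0]

end

/-- The Ricci tensor in the frame adapted to the metric. -/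
noncomputable def kric (W Gx Gy Gr Gxx Gxr Gyy Gyr Grr H Hx Hy Hr Hxx Hxr Hyy Hyr Hrr f10 f01 f20 f02 f30 f21 f12 f03 : ℝ) :
    Matrix (Fin 4) (Fin 4) ℝ :=
  ksym (-Gr * Gx * W ^ 2 * f01 + Gr * Gy * W ^ 2 * f10 + 2 * Gr * Hr + (1/2) * Gr ^ 2 * W ^ 2 *
  f01 ^ 2 + (1/2) * Gr ^ 2 * W ^ 2 * f10 ^ 2 + 2 * Grr + 2 * Grr * H - (1/2) * Grr * W * f01 ^ 2
  - (1/2) * Grr * W * f10 ^ 2 + (1/2) * Gx ^ 2 * W ^ 2 + Gxr * W * f01 - (1/2) * Gxx * W + (1/2)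
  * Gy ^ 2 * W ^ 2 - Gyr * W * f10 - (1/2) * Gyy * W - H * W * f02 * f20 - (1/2) * H * W * f02 ^
  2 - (1/2) * H * W * f20 ^ 2) 0 (-(1/2) * Gr * Gx * W ^ 2 - (1/2) * Gr * H * W ^ 2 * f02 * f10
  - (1/2) * Gr * H * W ^ 2 * f10 * f20 + (1/2) * Gr ^ 2 * W ^ 2 * f01 - (1/2) * Grr * W * f01 +
  (1/2) * Gxr * W - (1/2) * Gy * H * W ^ 2 * f02 - (1/2) * Gy * H * W ^ 2 * f20 + (1/2) * H * W
  * f03 + (1/2) * H * W * f21 + (1/2) * Hr * W * f02 * f10 + (1/2) * Hr * W * f10 * f20 - Hrr *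
  f01 + Hxr + (1/2) * Hy * W * f02 + (1/2) * Hy * W * f20) ((1/2) * Gr * Gx * W ^ 2 - (1/4) * Gr
  * W ^ 2 * f02 * f10 - (1/4) * Gr * W ^ 2 * f10 * f20 - (1/2) * Gr ^ 2 * W ^ 2 * f01 + (1/2) *
  Grr * W * f01 - (1/2) * Gxr * W - (1/4) * Gy * W ^ 2 * f02 - (1/4) * Gy * W ^ 2 * f20 + (1/4)
  * W * f03 + (1/4) * W * f21) (-Gr * Gx * W ^ 2 * f01 + Gr * Gy * W ^ 2 * f10 + 2 * Gr * Hr +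
  (1/2) * Gr ^ 2 * W ^ 2 * f01 ^ 2 + (1/2) * Gr ^ 2 * W ^ 2 * f10 ^ 2 + 2 * Grr + 2 * Grr * H -
  (1/2) * Grr * W * f01 ^ 2 - (1/2) * Grr * W * f10 ^ 2 + (1/2) * Gx ^ 2 * W ^ 2 + Gxr * W * f01
  - (1/2) * Gxx * W + (1/2) * Gy ^ 2 * W ^ 2 - Gyr * W * f10 - (1/2) * Gyy * W - H * W * f02 *
  f20 - (1/2) * H * W * f02 ^ 2 - (1/2) * H * W * f20 ^ 2) (-(1/2) * Gr * Gy * W ^ 2 - (1/2) *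
  Gr * H * W ^ 2 * f01 * f02 - (1/2) * Gr * H * W ^ 2 * f01 * f20 - (1/2) * Gr ^ 2 * W ^ 2 * f10
  + (1/2) * Grr * W * f10 + (1/2) * Gx * H * W ^ 2 * f02 + (1/2) * Gx * H * W ^ 2 * f20 + (1/2)
  * Gyr * W - (1/2) * H * W * f12 - (1/2) * H * W * f30 + (1/2) * Hr * W * f01 * f02 + (1/2) *
  Hr * W * f01 * f20 + Hrr * f10 - (1/2) * Hx * W * f02 - (1/2) * Hx * W * f20 + Hyr) ((1/2) *
  Gr * Gy * W ^ 2 - (1/4) * Gr * W ^ 2 * f01 * f02 - (1/4) * Gr * W ^ 2 * f01 * f20 + (1/2) * Gr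
  ^ 2 * W ^ 2 * f10 - (1/2) * Grr * W * f10 + (1/4) * Gx * W ^ 2 * f02 + (1/4) * Gx * W ^ 2 *
  f20 - (1/2) * Gyr * W - (1/4) * W * f12 - (1/4) * W * f30) (2 * Gr * H * Hr * W + (1/2) * Gr ^
  2 * W ^ 2 - Grr * W + 2 * H * Hrr + H ^ 2 * W ^ 2 * f02 * f20 + (1/2) * H ^ 2 * W ^ 2 * f02 ^
  2 + (1/2) * H ^ 2 * W ^ 2 * f20 ^ 2 - (1/2) * Hrr * W * f01 ^ 2 - (1/2) * Hrr * W * f10 ^ 2 +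
  Hxr * W * f01 - (1/2) * Hxx * W - Hyr * W * f10 - (1/2) * Hyy * W) (Gr * Hr * W - (1/2) * Gr ^
  2 * W ^ 2 + Grr * W + (1/2) * H * W ^ 2 * f02 * f20 + (1/4) * H * W ^ 2 * f02 ^ 2 + (1/4) * H
  * W ^ 2 * f20 ^ 2 + Hrr) ((1/2) * Gr ^ 2 * W ^ 2 - Grr * W + (1/4) * W ^ 2 * f02 * f20 + (1/8)
  * W ^ 2 * f02 ^ 2 + (1/8) * W ^ 2 * f20 ^ 2)

/-- The coframe. -/
def kcof (f10 f01 : ℝ) : Matrix (Fin 4) (Fin 4) ℝ :=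
  !![1, 0, 0, 0; 0, 1, 0, 0; -f01, f10, 1, 0; 0, 0, 1, 1]

/-- Jets of the metric coefficients. -/
structure KJets (g : (Fin 4 → ℝ) → Matrix (Fin 4) (Fin 4) ℝ) (U : Set (Fin 4 → ℝ))
    (W G Gx Gy Gr Gxx Gxy Gxr Gyy Gyr Grr H Hx Hy Hr Hxx Hxy Hxr Hyy Hyr Hrr f10 f01 f20 f11 f02
    f30 f21 f12 f03 : (Fin 4 → ℝ) → ℝ) : Prop where
  isOpen : IsOpen U
  hg : ∀ q, g q = kmet (G q) (H q) (f10 q) (f01 q)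
  hWG : ∀ q ∈ U, W q * G q = 1
  jW : ∀ q ∈ U, J W q (-Gx q * W q ^ 2) (-Gy q * W q ^ 2) (-Gr q * W q ^ 2)
  jG : ∀ q ∈ U, J G q (Gx q) (Gy q) (Gr q)
  jGx : ∀ q ∈ U, J Gx q (Gxx q) (Gxy q) (Gxr q)
  jGy : ∀ q ∈ U, J Gy q (Gxy q) (Gyy q) (Gyr q)
  jGr : ∀ q ∈ U, J Gr q (Gxr q) (Gyr q) (Grr q)
  jH : ∀ q ∈ U, J H q (Hx q) (Hy q) (Hr q)
  jHx : ∀ q ∈ U, J Hx q (Hxx q) (Hxy q) (Hxr q)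
  jHy : ∀ q ∈ U, J Hy q (Hxy q) (Hyy q) (Hyr q)
  jHr : ∀ q ∈ U, J Hr q (Hxr q) (Hyr q) (Hrr q)
  jf10 : ∀ q ∈ U, J f10 q (f20 q) (f11 q) (0)
  jf01 : ∀ q ∈ U, J f01 q (f11 q) (f02 q) (0)
  jf20 : ∀ q ∈ U, J f20 q (f30 q) (f21 q) (0)
  jf11 : ∀ q ∈ U, J f11 q (f21 q) (f12 q) (0)
  jf02 : ∀ q ∈ U, J f02 q (f12 q) (f03 q) (0)

section

variable {g : (Fin 4 → ℝ) → Matrix (Fin 4) (Fin 4) ℝ} {U : Set (Fin 4 → ℝ)}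
  {W G Gx Gy Gr Gxx Gxy Gxr Gyy Gyr Grr H Hx Hy Hr Hxx Hxy Hxr Hyy Hyr Hrr f10 f01 f20 f11 f02
  f30 f21 f12 f03 : (Fin 4 → ℝ) → ℝ}
  {q : Fin 4 → ℝ}

local notation "KJ" => KJets g U W G Gx Gy Gr Gxx Gxy Gxr Gyy Gyr Grr H Hx Hy Hr Hxx Hxy Hxr Hyy Hyr Hrr f10 f01 f20 f11 f02 f30 f21 f12 f03

set_option maxHeartbeats 8000000 in
theorem kj_mul (h : KJ) (hq : q ∈ U) :
    g q * kinv (W q) (H q) (f10 q) (f01 q) = 1 := by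
  rw [h.hg]
  have e := h.hWG q hq
  ext i j
  fin_cases i <;> fin_cases j <;>
    simp [kmet, kinv, ksym, Matrix.mul_apply, Fin.sum_univ_four] <;> grind

set_option maxHeartbeats 8000000 in
theorem kj_inv (h : KJ) (hq : q ∈ U) :
    (g q)⁻¹ = kinv (W q) (H q) (f10 q) (f01 q) :=
  Matrix.inv_eq_right_inv (kj_mul h hq)

set_option maxHeartbeats 8000000 in
theorem kj_dg (h : KJ) (hq : q ∈ U) (A B : Fin 4) :
    J (fun q => g q A B) q
      (kdmet (H q) (f10 q) (f01 q) (Gx q) (Hx q) (f20 q) (f11 q) A B)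
      (kdmet (H q) (f10 q) (f01 q) (Gy q) (Hy q) (f11 q) (f02 q) A B)
      (kdmet (H q) (f10 q) (f01 q) (Gr q) (Hr q) (0) (0) A B) := by
  have wW := h.jW q hq
  have wG := h.jG q hq
  have wGx := h.jGx q hq
  have wGy := h.jGy q hq
  have wGr := h.jGr q hq
  have wH := h.jH q hq
  have wHx := h.jHx q hq
  have wHy := h.jHy q hq
  have wHr := h.jHr q hq
  have wf10 := h.jf10 q hq
  have wf01 := h.jf01 q hq
  have wf20 := h.jf20 q hq
  have wf11 := h.jf11 q hq
  have wf02 := h.jf02 q hq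
  simp only [h.hg]
  fin_cases A <;> fin_cases B <;> simp [kmet, kdmet, ksym] <;>
    refine J.congr_val (by
    with_reducible repeat' first
        | exact J.const _
        | assumption
        | apply J.add
        | apply J.sub
        | apply J.neg
        | apply J.sq
        | apply J.cube
        | apply J.four
        | apply J.mul) ?_ ?_ ?_
  all_goals ring

set_option maxHeartbeats 8000000 in
theorem kj_symm (h : KJ) (C A B : Fin 4) :
    Christoffel g C A B q = Christoffel g C B A q := by
  have e : ∀ A B, (fun q => g q A B) = fun q => g q B A := by
    intro A B
    funext q
    rw [h.hg]
    fin_cases A <;> fin_cases B <;> rfl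
  unfold Christoffel
  rw [e A B]
  congr 1
  refine Finset.sum_congr rfl fun D _ => ?_
  ring

set_option maxHeartbeats 8000000 in
theorem kj_G (h : KJ) (hq : q ∈ U) (C A B : Fin 4) :
    Christoffel g C A B q =
      kgam (W q) (Gx q) (Gy q) (Gr q) (H q) (Hx q) (Hy q) (Hr q) (f10 q) (f01 q) (f20 q) (f11 q)
      (f02 q) C A B := by
  have e0 := fun A B => (kj_dg h hq A B).2.1
  have e1 := fun A B => (kj_dg h hq A B).2.2.1
  have e2 := fun A B => (kj_dg h hq A B).2.2.2.1
  have e3 := fun A B => (kj_dg h hq A B).2.2.2.2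
  simp only [Christoffel, kj_inv h hq, Fin.sum_univ_four, e0, e1, e2, e3]
  fin_cases A <;> fin_cases B <;>
    simp [e0, e1, e2, e3] <;>
    fin_cases C <;>
    simp [kgam, kinv, kdmet, ksym] <;>
    (try simp only [
      kg000, kg001, kg002, kg003, kg011, kg012, kg013, kg022, kg100, kg101, kg102, kg103, kg111,
      kg112, kg113, kg122, kg200, kg201, kg202, kg203, kg211, kg212, kg213, kg222, kg300, kg301,
      kg302, kg303, kg311, kg312, kg313, kg322, kg323]) <;> ring

set_option maxHeartbeats 8000000 in
theorem kj_J (h : KJ) (hq : q ∈ U) (C A B : Fin 4) :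
    J (Christoffel g C A B) q
      (kdgam (W q) (Gx q) (Gy q) (Gr q) (H q) (Hx q) (Hy q) (Hr q) (f10 q) (f01 q) (f20 q) (f11
      q) (f02 q) (-Gx q * W q ^ 2) (Gxx q) (Gxy q) (Gxr q) (Hx q) (Hxx q) (Hxy q) (Hxr q) (f20
      q) (f11 q) (f30 q) (f21 q) (f12 q) C A B)
      (kdgam (W q) (Gx q) (Gy q) (Gr q) (H q) (Hx q) (Hy q) (Hr q) (f10 q) (f01 q) (f20 q) (f11
      q) (f02 q) (-Gy q * W q ^ 2) (Gxy q) (Gyy q) (Gyr q) (Hy q) (Hxy q) (Hyy q) (Hyr q) (f11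
      q) (f02 q) (f21 q) (f12 q) (f03 q) C A B)
      (kdgam (W q) (Gx q) (Gy q) (Gr q) (H q) (Hx q) (Hy q) (Hr q) (f10 q) (f01 q) (f20 q) (f11
      q) (f02 q) (-Gr q * W q ^ 2) (Gxr q) (Gyr q) (Grr q) (Hr q) (Hxr q) (Hyr q) (Hrr q) (0)
      (0) (0) (0) (0) C A B) := by
  have wW := h.jW q hq
  have wG := h.jG q hq
  have wGx := h.jGx q hq
  have wGy := h.jGy q hq
  have wGr := h.jGr q hq
  have wH := h.jH q hq
  have wHx := h.jHx q hq
  have wHy := h.jHy q hq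
  have wHr := h.jHr q hq
  have wf10 := h.jf10 q hq
  have wf01 := h.jf01 q hq
  have wf20 := h.jf20 q hq
  have wf11 := h.jf11 q hq
  have wf02 := h.jf02 q hq
  refine J.congr_fun (f := fun q =>
      kgam (W q) (Gx q) (Gy q) (Gr q) (H q) (Hx q) (Hy q) (Hr q) (f10 q) (f01 q) (f20 q) (f11 q)
      (f02 q) C A B)
    ?_ (Filter.eventuallyEq_of_mem (h.isOpen.mem_nhds hq) fun q hq => kj_G h hq C A B)
  fin_cases C <;> fin_cases A <;> fin_cases B <;> simp [kgam, kdgam, ksym] <;>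
    (try simp only [
      kg000, kg001, kg002, kg003, kg011, kg012, kg013, kg022, kg100, kg101, kg102, kg103, kg111,
      kg112, kg113, kg122, kg200, kg201, kg202, kg203, kg211, kg212, kg213, kg222, kg300, kg301,
      kg302, kg303, kg311, kg312, kg313, kg322, kg323, kdg000, kdg001, kdg002, kdg003, kdg011,
      kdg012, kdg013, kdg022, kdg100, kdg101, kdg102, kdg103, kdg111, kdg112, kdg113, kdg122,
      kdg200, kdg201, kdg202, kdg203, kdg211, kdg212, kdg213, kdg222, kdg300, kdg301, kdg302,
      kdg303, kdg311, kdg312, kdg313, kdg322, kdg323]) <;>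
    refine J.congr_val (by
    with_reducible repeat' first
        | exact J.const _
        | assumption
        | apply J.add
        | apply J.sub
        | apply J.neg
        | apply J.sq
        | apply J.cube
        | apply J.four
        | apply J.mul) ?_ ?_ ?_
  all_goals ring

set_option maxHeartbeats 8000000 in
theorem kj_R (h : KJ) (hq : q ∈ U) (A B : Fin 4) :
    RicciT g A B q = ∑ i, ∑ j, kcof (f10 q) (f01 q) i A * kcof (f10 q) (f01 q) j B *
      kric (W q) (Gx q) (Gy q) (Gr q) (Gxx q) (Gxr q) (Gyy q) (Gyr q) (Grr q) (H q) (Hx q) (Hy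
      q) (Hr q) (Hxx q) (Hxr q) (Hyy q) (Hyr q) (Hrr q) (f10 q) (f01 q) (f20 q) (f02 q) (f30 q)
      (f21 q) (f12 q) (f03 q) i j := by
  have e0 := fun C A B => (kj_J h hq C A B).2.1
  have e1 := fun C A B => (kj_J h hq C A B).2.2.1
  have e2 := fun C A B => (kj_J h hq C A B).2.2.2.1
  have e3 := fun C A B => (kj_J h hq C A B).2.2.2.2
  simp only [RicciT, Fin.sum_univ_four, kj_G h hq]
  fin_cases A <;> fin_cases B <;>
    simp [e0, e1, e2, e3] <;>
    simp [kgam, kdgam, kric, kcof, ksym] <;>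
    (try simp only [
      kg000, kg001, kg002, kg003, kg011, kg012, kg013, kg022, kg100, kg101, kg102, kg103, kg111,
      kg112, kg113, kg122, kg200, kg201, kg202, kg203, kg211, kg212, kg213, kg222, kg300, kg301,
      kg302, kg303, kg311, kg312, kg313, kg322, kg323, kdg000, kdg001, kdg002, kdg003, kdg011,
      kdg012, kdg013, kdg022, kdg100, kdg101, kdg102, kdg103, kdg111, kdg112, kdg113, kdg122,
      kdg200, kdg201, kdg202, kdg203, kdg211, kdg212, kdg213, kdg222, kdg300, kdg301, kdg302,
      kdg303, kdg311, kdg312, kdg313, kdg322, kdg323]) <;> ring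

end
section

variable {g : (Fin 4 → ℝ) → Matrix (Fin 4) (Fin 4) ℝ} {U : Set (Fin 4 → ℝ)} {κ K : ℝ}
  {u s f00 f01 f02 f03 f10 f11 f12 f20 f21 f30 : (Fin 4 → ℝ) → ℝ}

theorem J_coord0 {q : Fin 4 → ℝ} : J (fun q => q 0) q 1 0 0 := by
  have e : fderiv ℝ (fun q : Fin 4 → ℝ => q 0) q = ContinuousLinearMap.proj 0 :=
    (ContinuousLinearMap.proj (R := ℝ) (φ := fun _ : Fin 4 => ℝ) 0).fderiv
  refine ⟨by fun_prop, ?_, ?_, ?_, ?_⟩ <;> unfold pd <;> rw [e] <;> simp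

theorem J_coord1 {q : Fin 4 → ℝ} : J (fun q => q 1) q 0 1 0 := by
  have e : fderiv ℝ (fun q : Fin 4 → ℝ => q 1) q = ContinuousLinearMap.proj 1 :=
    (ContinuousLinearMap.proj (R := ℝ) (φ := fun _ : Fin 4 => ℝ) 1).fderiv
  refine ⟨by fun_prop, ?_, ?_, ?_, ?_⟩ <;> unfold pd <;> rw [e] <;> simp

theorem J_coord3 {q : Fin 4 → ℝ} : J (fun q => q 3) q 0 0 1 := by
  have e : fderiv ℝ (fun q : Fin 4 → ℝ => q 3) q = ContinuousLinearMap.proj 3 :=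
    (ContinuousLinearMap.proj (R := ℝ) (φ := fun _ : Fin 4 => ℝ) 3).fderiv
  refine ⟨by fun_prop, ?_, ?_, ?_, ?_⟩ <;> unfold pd <;> rw [e] <;> simp

set_option maxHeartbeats 4000000 in
theorem kerr_jets (hU : IsOpen U)
    (hg : ∀ q, g q = kmet (-2 * f00 q ^ 2 * u q ^ 2 * κ - 2 * q 3 ^ 2 * u q ^ 2 * κ)
      (-(1/2) + (1/2) * K * q 3 * s q) (f10 q) (f01 q))
    (hG : ∀ q ∈ U, -2 * f00 q ^ 2 * u q ^ 2 * κ - 2 * q 3 ^ 2 * u q ^ 2 * κ ≠ 0)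
    (wu : ∀ q ∈ U, J u q (-2 * u q ^ 2 * q 0 * κ) (-2 * u q ^ 2 * q 1 * κ) 0)
    (ws : ∀ q ∈ U, J s q (-2 * f00 q * f10 q * s q ^ 2) (-2 * f00 q * f01 q * s q ^ 2)
      (-2 * q 3 * s q ^ 2))
    (wf00 : ∀ q ∈ U, J f00 q (f10 q) (f01 q) 0)
    (wf01 : ∀ q ∈ U, J f01 q (f11 q) (f02 q) 0)
    (wf02 : ∀ q ∈ U, J f02 q (f12 q) (f03 q) 0)
    (wf10 : ∀ q ∈ U, J f10 q (f20 q) (f11 q) 0)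
    (wf11 : ∀ q ∈ U, J f11 q (f21 q) (f12 q) 0)
    (wf20 : ∀ q ∈ U, J f20 q (f30 q) (f21 q) 0) :
    KJets g U
      ((fun q => (-2 * f00 q ^ 2 * u q ^ 2 * κ - 2 * q 3 ^ 2 * u q ^ 2 * κ)⁻¹))
      (fun q => -2 * f00 q ^ 2 * u q ^ 2 * κ - 2 * q 3 ^ 2 * u q ^ 2 * κ)
      (fun q => -4 * f00 q * f10 q * u q ^ 2 * κ + 8 * f00 q ^ 2 * u q ^ 3 * q 0 * κ ^ 2 + 8 * q
      3 ^ 2 * u q ^ 3 * q 0 * κ ^ 2)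
      (fun q => -4 * f00 q * f01 q * u q ^ 2 * κ + 8 * f00 q ^ 2 * u q ^ 3 * q 1 * κ ^ 2 + 8 * q
      3 ^ 2 * u q ^ 3 * q 1 * κ ^ 2)
      (fun q => -4 * q 3 * u q ^ 2 * κ)
      (fun q => 32 * f00 q * f10 q * u q ^ 3 * q 0 * κ ^ 2 - 4 * f00 q * f20 q * u q ^ 2 * κ + 8
      * f00 q ^ 2 * u q ^ 3 * κ ^ 2 - 48 * f00 q ^ 2 * u q ^ 4 * q 0 ^ 2 * κ ^ 3 - 4 * f10 q ^ 2
      * u q ^ 2 * κ + 8 * q 3 ^ 2 * u q ^ 3 * κ ^ 2 - 48 * q 3 ^ 2 * u q ^ 4 * q 0 ^ 2 * κ ^ 3)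
      (fun q => 16 * f00 q * f01 q * u q ^ 3 * q 0 * κ ^ 2 + 16 * f00 q * f10 q * u q ^ 3 * q 1
      * κ ^ 2 - 4 * f00 q * f11 q * u q ^ 2 * κ - 48 * f00 q ^ 2 * u q ^ 4 * q 0 * q 1 * κ ^ 3 -
      4 * f01 q * f10 q * u q ^ 2 * κ - 48 * q 3 ^ 2 * u q ^ 4 * q 0 * q 1 * κ ^ 3)
      (fun q => 16 * q 3 * u q ^ 3 * q 0 * κ ^ 2)
      (fun q => 32 * f00 q * f01 q * u q ^ 3 * q 1 * κ ^ 2 - 4 * f00 q * f02 q * u q ^ 2 * κ + 8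
      * f00 q ^ 2 * u q ^ 3 * κ ^ 2 - 48 * f00 q ^ 2 * u q ^ 4 * q 1 ^ 2 * κ ^ 3 - 4 * f01 q ^ 2
      * u q ^ 2 * κ + 8 * q 3 ^ 2 * u q ^ 3 * κ ^ 2 - 48 * q 3 ^ 2 * u q ^ 4 * q 1 ^ 2 * κ ^ 3)
      (fun q => 16 * q 3 * u q ^ 3 * q 1 * κ ^ 2)
      (fun q => -4 * u q ^ 2 * κ)
      (fun q => -(1/2) + (1/2) * K * q 3 * s q)
      (fun q => -K * f00 q * f10 q * q 3 * s q ^ 2)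
      (fun q => -K * f00 q * f01 q * q 3 * s q ^ 2)
      (fun q => -K * q 3 ^ 2 * s q ^ 2 + (1/2) * K * s q)
      (fun q => -K * f00 q * f20 q * q 3 * s q ^ 2 + 4 * K * f00 q ^ 2 * f10 q ^ 2 * q 3 * s q ^
      3 - K * f10 q ^ 2 * q 3 * s q ^ 2)
      (fun q => -K * f00 q * f11 q * q 3 * s q ^ 2 + 4 * K * f00 q ^ 2 * f01 q * f10 q * q 3 * s
      q ^ 3 - K * f01 q * f10 q * q 3 * s q ^ 2)
      (fun q => 4 * K * f00 q * f10 q * q 3 ^ 2 * s q ^ 3 - K * f00 q * f10 q * s q ^ 2)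
      (fun q => -K * f00 q * f02 q * q 3 * s q ^ 2 + 4 * K * f00 q ^ 2 * f01 q ^ 2 * q 3 * s q ^
      3 - K * f01 q ^ 2 * q 3 * s q ^ 2)
      (fun q => 4 * K * f00 q * f01 q * q 3 ^ 2 * s q ^ 3 - K * f00 q * f01 q * s q ^ 2)
      (fun q => -3 * K * q 3 * s q ^ 2 + 4 * K * q 3 ^ 3 * s q ^ 3)
      f10
      f01
      f20
      f11
      f02
      f30
      f21
      f12
      f03 := by
  have jG : ∀ q ∈ U, J (fun q => -2 * f00 q ^ 2 * u q ^ 2 * κ - 2 * q 3 ^ 2 * u q ^ 2 * κ) q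
      (-4 * f00 q * f10 q * u q ^ 2 * κ + 8 * f00 q ^ 2 * u q ^ 3 * q 0 * κ ^ 2 + 8 * q 3 ^ 2 * u q ^ 3 * q 0 * κ ^ 2)
      (-4 * f00 q * f01 q * u q ^ 2 * κ + 8 * f00 q ^ 2 * u q ^ 3 * q 1 * κ ^ 2 + 8 * q 3 ^ 2 * u q ^ 3 * q 1 * κ ^ 2)
      (-4 * q 3 * u q ^ 2 * κ) := by
    intro q hq
    have hu := wu q hq
    have hs := ws q hq
    have h00 := wf00 q hq
    refine J.congr_val (by
      with_reducible repeat' first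
          | exact J.const _
          | exact J_coord0
          | exact J_coord1
          | exact J_coord3
          | assumption
          | apply J.add
          | apply J.sub
          | apply J.neg
          | apply J.sq
          | apply J.cube
          | apply J.four
          | apply J.mul) ?_ ?_ ?_ <;> ring
  refine
    { isOpen := hU
      hg := hg
      hWG := fun q hq => inv_mul_cancel₀ (hG q hq)
      jG := jG
      jW := fun q hq => ((jG q hq).inv (hG q hq)).congr_val (by ring) (by ring) (by ring)
      jf01 := wf01
      jf02 := wf02
      jf10 := wf10
      jf11 := wf11
      jf20 := wf20
      jGx := ?_
      jGy := ?_
      jGr := ?_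
      jH := ?_
      jHx := ?_
      jHy := ?_
      jHr := ?_ }
  all_goals
    intro q hq
    have hu := wu q hq
    have hs := ws q hq
    have h00 := wf00 q hq
    have h01 := wf01 q hq
    have h02 := wf02 q hq
    have h10 := wf10 q hq
    have h11 := wf11 q hq
    have h20 := wf20 q hq
    refine J.congr_val (by
      with_reducible repeat' first
          | exact J.const _
          | exact J_coord0
          | exact J_coord1
          | exact J_coord3
          | assumption
          | apply J.add
          | apply J.sub
          | apply J.neg
          | apply J.sq
          | apply J.cube
          | apply J.four
          | apply J.mul) ?_ ?_ ?_ <;> ring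

end

set_option maxHeartbeats 4000000 in
theorem kerr_alg (κ K x y r u s W P S f00 f01 f02 f03 f10 f11 f12 f20 f21 f30 : ℝ) (hκ : κ = 1 ∨ κ = -1)
    (hP0 : P ≠ 0) (hS0 : S ≠ 0) (hP : P = 1 + κ * (x ^ 2 + y ^ 2)) (hS : S = r ^ 2 + f00 ^ 2)
    (hu : u = P⁻¹) (hs : s = S⁻¹) (hW : W = (-2 * f00 ^ 2 * u ^ 2 * κ - 2 * r ^ 2 * u ^ 2 * κ)⁻¹)
    (h2 : f02 = -8 * κ * f00 * u ^ 2 - f20)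
    (h3 : f12 = -8 * κ * f10 * u ^ 2 + 32 * κ ^ 2 * x * f00 * u ^ 3 - f30)
    (h4 : f03 = -8 * κ * f01 * u ^ 2 + 32 * κ ^ 2 * y * f00 * u ^ 3 - f21) :
    kric W (-4 * f00 * f10 * u ^ 2 * κ + 8 * f00 ^ 2 * u ^ 3 * x * κ ^ 2 + 8 * r ^ 2 * u ^ 3 * x
    * κ ^ 2) (-4 * f00 * f01 * u ^ 2 * κ + 8 * f00 ^ 2 * u ^ 3 * y * κ ^ 2 + 8 * r ^ 2 * u ^ 3 *
    y * κ ^ 2) (-4 * r * u ^ 2 * κ) (32 * f00 * f10 * u ^ 3 * x * κ ^ 2 - 4 * f00 * f20 * u ^ 2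
    * κ + 8 * f00 ^ 2 * u ^ 3 * κ ^ 2 - 48 * f00 ^ 2 * u ^ 4 * x ^ 2 * κ ^ 3 - 4 * f10 ^ 2 * u ^
    2 * κ + 8 * r ^ 2 * u ^ 3 * κ ^ 2 - 48 * r ^ 2 * u ^ 4 * x ^ 2 * κ ^ 3) (16 * r * u ^ 3 * x
    * κ ^ 2) (32 * f00 * f01 * u ^ 3 * y * κ ^ 2 - 4 * f00 * f02 * u ^ 2 * κ + 8 * f00 ^ 2 * u ^
    3 * κ ^ 2 - 48 * f00 ^ 2 * u ^ 4 * y ^ 2 * κ ^ 3 - 4 * f01 ^ 2 * u ^ 2 * κ + 8 * r ^ 2 * u ^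
    3 * κ ^ 2 - 48 * r ^ 2 * u ^ 4 * y ^ 2 * κ ^ 3) (16 * r * u ^ 3 * y * κ ^ 2) (-4 * u ^ 2 *
    κ) (-(1/2) + (1/2) * K * r * s) (-K * f00 * f10 * r * s ^ 2) (-K * f00 * f01 * r * s ^ 2)
    (-K * r ^ 2 * s ^ 2 + (1/2) * K * s) (-K * f00 * f20 * r * s ^ 2 + 4 * K * f00 ^ 2 * f10 ^ 2
    * r * s ^ 3 - K * f10 ^ 2 * r * s ^ 2) (4 * K * f00 * f10 * r ^ 2 * s ^ 3 - K * f00 * f10 *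
    s ^ 2) (-K * f00 * f02 * r * s ^ 2 + 4 * K * f00 ^ 2 * f01 ^ 2 * r * s ^ 3 - K * f01 ^ 2 * r
    * s ^ 2) (4 * K * f00 * f01 * r ^ 2 * s ^ 3 - K * f00 * f01 * s ^ 2) (-3 * K * r * s ^ 2 + 4
    * K * r ^ 3 * s ^ 3) f10 f01 f20 f02 f30 f21 f12 f03 = 0 := by
  have hW' : W = -(κ / 2) * P ^ 2 * S⁻¹ := by
    rw [hW, hu]
    have : -2 * κ * (P⁻¹) ^ 2 * f00 ^ 2 - 2 * κ * (P⁻¹) ^ 2 * r ^ 2 = -2 * κ * P⁻¹ ^ 2 * S := by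
      rw [hS]; ring
    rcases hκ with rfl | rfl
    · rw [show ∀ t : ℝ, t = -2 * 1 * P⁻¹ ^ 2 * S → t⁻¹ = -(1 / 2) * P ^ 2 * S⁻¹ from ?_]
      · linear_combination this
      · rintro _ rfl
        field_simp
    · rw [show ∀ t : ℝ, t = -2 * (-1) * P⁻¹ ^ 2 * S → t⁻¹ = -(-1 / 2) * P ^ 2 * S⁻¹ from ?_]
      · linear_combination this
      · rintro _ rfl
        field_simp
  clear hW
  subst hu hs h2 h3 h4 hW'
  ext i j
  fin_cases i <;> fin_cases j <;> simp [kric, ksym] <;> field_simp <;>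
    rcases hκ with rfl | rfl <;> subst hP hS <;> ring

/-- A function of `(x, y)` differentiable at the base point, seen as a function on `ℝ⁴`. -/
theorem J_base {ψ : ℝ × ℝ → ℝ} {q : Fin 4 → ℝ} (h : DifferentiableAt ℝ ψ (q 0, q 1)) :
    J (fun q => ψ (q 0, q 1)) q (pdx ψ (q 0, q 1)) (pdy ψ (q 0, q 1)) 0 := by
  have hL : HasFDerivAt (fun q : Fin 4 → ℝ => (q 0, q 1))
      ((ContinuousLinearMap.proj (R := ℝ) (φ := fun _ : Fin 4 => ℝ) 0).prod
        (ContinuousLinearMap.proj (R := ℝ) (φ := fun _ : Fin 4 => ℝ) 1)) q :=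
    ContinuousLinearMap.hasFDerivAt
      ((ContinuousLinearMap.proj (R := ℝ) (φ := fun _ : Fin 4 => ℝ) 0).prod
        (ContinuousLinearMap.proj (R := ℝ) (φ := fun _ : Fin 4 => ℝ) 1))
  have hc := HasFDerivAt.comp q (f := fun q : Fin 4 → ℝ => (q 0, q 1)) h.hasFDerivAt hL
  have e : fderiv ℝ (fun q : Fin 4 → ℝ => ψ (q 0, q 1)) q = _ := hc.fderiv
  refine ⟨hc.differentiableAt, ?_, ?_, ?_, ?_⟩ <;> unfold pd <;> rw [e] <;> simp [pdx, pdy]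
  all_goals exact map_zero (fderiv ℝ ψ (q 0, q 1))

theorem smooth_pdx {ψ : ℝ × ℝ → ℝ} {V : Set (ℝ × ℝ)} (hV : IsOpen V)
    (h : ContDiffOn ℝ (⊤ : ℕ∞) ψ V) : ContDiffOn ℝ (⊤ : ℕ∞) (pdx ψ) V :=
  (h.fderiv_of_isOpen hV (by simp)).clm_apply contDiffOn_const

theorem smooth_pdy {ψ : ℝ × ℝ → ℝ} {V : Set (ℝ × ℝ)} (hV : IsOpen V)
    (h : ContDiffOn ℝ (⊤ : ℕ∞) ψ V) : ContDiffOn ℝ (⊤ : ℕ∞) (pdy ψ) V :=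
  (h.fderiv_of_isOpen hV (by simp)).clm_apply contDiffOn_const

theorem smooth_diff {ψ : ℝ × ℝ → ℝ} {V : Set (ℝ × ℝ)} (hV : IsOpen V)
    (h : ContDiffOn ℝ (⊤ : ℕ∞) ψ V) {p : ℝ × ℝ} (hp : p ∈ V) : DifferentiableAt ℝ ψ p :=
  (h.contDiffAt (hV.mem_nhds hp)).differentiableAt (by simp)

/-- Mixed partial derivatives commute. -/
theorem pdx_pdy_comm {ψ : ℝ × ℝ → ℝ} {V : Set (ℝ × ℝ)} (hV : IsOpen V)
    (h : ContDiffOn ℝ (⊤ : ℕ∞) ψ V) {p : ℝ × ℝ} (hp : p ∈ V) :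
    pdx (pdy ψ) p = pdy (pdx ψ) p := by
  have hc := h.contDiffAt (hV.mem_nhds hp)
  have hs : IsSymmSndFDerivAt ℝ ψ p := hc.isSymmSndFDerivAt (by
    rw [minSmoothness_of_isRCLikeNormedField]
    exact WithTop.coe_le_coe.2 le_top)
  have hd : DifferentiableAt ℝ (fderiv ℝ ψ) p :=
    ((h.fderiv_of_isOpen hV (m := (⊤ : ℕ∞)) (by simp)).contDiffAt
      (hV.mem_nhds hp)).differentiableAt (by simp)
  have key : ∀ v w : ℝ × ℝ, fderiv ℝ (fun z => fderiv ℝ ψ z v) p w =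
      fderiv ℝ (fderiv ℝ ψ) p w v := by
    intro v w
    rw [fderiv_clm_apply hd (differentiableAt_const v)]
    simp
  have k1 : pdx (pdy ψ) p = fderiv ℝ (fderiv ℝ ψ) p (1, 0) (0, 1) := key (0, 1) (1, 0)
  have k2 : pdy (pdx ψ) p = fderiv ℝ (fderiv ℝ ψ) p (0, 1) (1, 0) := key (1, 0) (0, 1)
  rw [k1, k2]
  exact hs.eq _ _

/-- Each metric of the Kerr family (6.1)/(1.7), written in the coordinates `(x, y, v, r)`,
is a genuine (pseudo-Riemannian) coordinate metric and is Ricci flat. -/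
theorem ricci_flat_of_kerr_family
    (κ : ℝ) (hκ : κ = 1 ∨ κ = -1)
    (V : Set (ℝ × ℝ)) (hVopen : IsOpen V)
    (hVdisk : κ = -1 → V ⊆ {p : ℝ × ℝ | p.1 ^ 2 + p.2 ^ 2 < 1})
    (φ : ℝ × ℝ → ℝ) (hφ : ContDiffOn ℝ (⊤ : ℕ∞) φ V)
    (hsign : ∀ p ∈ V, κ * φ p < 0)
    (hpde : ∀ p ∈ V, lap φ p + 8 * κ * φ p / (1 + κ * (p.1 ^ 2 + p.2 ^ 2)) ^ 2 = 0)
    (m kc : ℝ)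
    (θ ω : (Fin 4 → ℝ) → Fin 4 → ℝ)
    (hθ : ∀ p : Fin 4 → ℝ,
      θ p = ![-pdy φ (p 0, p 1), pdx φ (p 0, p 1), 1, 0])
    (hω : ∀ (p : Fin 4 → ℝ) (A : Fin 4),
      ω p A = (if A = 2 then (1 : ℝ) else 0) + (if A = 3 then (1 : ℝ) else 0) +
        (1 / 2) * (-1 + kc * m * p 3 / ((p 3) ^ 2 + (φ (p 0, p 1)) ^ 2)) * θ p A)
    (g : (Fin 4 → ℝ) → Matrix (Fin 4) (Fin 4) ℝ)
    (hg : ∀ (p : Fin 4 → ℝ) (A B : Fin 4),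
      g p A B =
        (if A = B ∧ (A = 0 ∨ A = 1) then
          -(κ / 2) * ((p 3) ^ 2 + (φ (p 0, p 1)) ^ 2) *
            (4 / (1 + κ * ((p 0) ^ 2 + (p 1) ^ 2)) ^ 2)
        else 0) + (θ p A * ω p B + θ p B * ω p A) / 2) :
    ∀ p : Fin 4 → ℝ, (p 0, p 1) ∈ V →
      IsUnit (g p) ∧ ∀ A B : Fin 4, RicciT g A B p = 0 := by
  have hU : IsOpen {q : Fin 4 → ℝ | (q 0, q 1) ∈ V} :=
    hVopen.preimage (by fun_prop : Continuous fun q : Fin 4 → ℝ => (q 0, q 1))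
  have hPpos : ∀ p ∈ V, 0 < 1 + κ * (p.1 ^ 2 + p.2 ^ 2) := by
    intro p hp
    rcases hκ with rfl | rfl
    · positivity
    · have := hVdisk rfl hp
      simp only [Set.mem_setOf_eq] at this
      linarith
  have hφ0 : ∀ p ∈ V, φ p ≠ 0 := by
    intro p hp h0
    have := hsign p hp
    simp [h0] at this
  have hκ0 : κ ≠ 0 := by rcases hκ with rfl | rfl <;> norm_num
  have sx := smooth_pdx hVopen hφ
  have sy := smooth_pdy hVopen hφ
  have sxx := smooth_pdx hVopen sx
  have syx := smooth_pdy hVopen sx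
  have syy := smooth_pdy hVopen sy
  have wf00 : ∀ q ∈ {q : Fin 4 → ℝ | (q 0, q 1) ∈ V}, J (fun q => φ (q 0, q 1)) q
      (pdx φ (q 0, q 1)) (pdy φ (q 0, q 1)) 0 :=
    fun q hq => J_base (smooth_diff hVopen hφ hq)
  have wf10 : ∀ q ∈ {q : Fin 4 → ℝ | (q 0, q 1) ∈ V}, J (fun q => pdx φ (q 0, q 1)) q
      (pdx (pdx φ) (q 0, q 1)) (pdy (pdx φ) (q 0, q 1)) 0 :=
    fun q hq => J_base (smooth_diff hVopen sx hq)
  have wf01 : ∀ q ∈ {q : Fin 4 → ℝ | (q 0, q 1) ∈ V}, J (fun q => pdy φ (q 0, q 1)) q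
      (pdy (pdx φ) (q 0, q 1)) (pdy (pdy φ) (q 0, q 1)) 0 :=
    fun q hq => (J_base (smooth_diff hVopen sy hq)).congr_val
      (pdx_pdy_comm hVopen hφ hq) rfl rfl
  have wf20 : ∀ q ∈ {q : Fin 4 → ℝ | (q 0, q 1) ∈ V}, J (fun q => pdx (pdx φ) (q 0, q 1)) q
      (pdx (pdx (pdx φ)) (q 0, q 1)) (pdy (pdx (pdx φ)) (q 0, q 1)) 0 :=
    fun q hq => J_base (smooth_diff hVopen sxx hq)
  have wf11 : ∀ q ∈ {q : Fin 4 → ℝ | (q 0, q 1) ∈ V}, J (fun q => pdy (pdx φ) (q 0, q 1)) q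
      (pdy (pdx (pdx φ)) (q 0, q 1)) (pdy (pdy (pdx φ)) (q 0, q 1)) 0 :=
    fun q hq => (J_base (smooth_diff hVopen syx hq)).congr_val
      (pdx_pdy_comm hVopen sx hq) rfl rfl
  have wf02 : ∀ q ∈ {q : Fin 4 → ℝ | (q 0, q 1) ∈ V}, J (fun q => pdy (pdy φ) (q 0, q 1)) q
      (pdy (pdy (pdx φ)) (q 0, q 1)) (pdy (pdy (pdy φ)) (q 0, q 1)) 0 := by
    intro q hq
    refine (J_base (smooth_diff hVopen syy hq)).congr_val ?_ rfl rfl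
    rw [pdx_pdy_comm hVopen sy hq]
    have e : pdx (pdy φ) =ᶠ[nhds (q 0, q 1)] pdy (pdx φ) :=
      Filter.eventually_of_mem (hVopen.mem_nhds hq) fun p hp => pdx_pdy_comm hVopen hφ hp
    show fderiv ℝ (pdx (pdy φ)) _ _ = fderiv ℝ (pdy (pdx φ)) _ _
    rw [e.fderiv_eq]
  have wu : ∀ q ∈ {q : Fin 4 → ℝ | (q 0, q 1) ∈ V},
      J (fun q => (1 + κ * (q 0 ^ 2 + q 1 ^ 2))⁻¹) q
        (-2 * ((1 + κ * (q 0 ^ 2 + q 1 ^ 2))⁻¹) ^ 2 * q 0 * κ)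
        (-2 * ((1 + κ * (q 0 ^ 2 + q 1 ^ 2))⁻¹) ^ 2 * q 1 * κ) 0 := by
    intro q hq
    refine J.congr_val (J.inv (J.add (J.const 1) (J.mul (J.const κ)
      (J.add (J.sq J_coord0) (J.sq J_coord1)))) (hPpos _ hq).ne') ?_ ?_ ?_ <;> ring
  have hS0 : ∀ q ∈ {q : Fin 4 → ℝ | (q 0, q 1) ∈ V}, q 3 ^ 2 + φ (q 0, q 1) ^ 2 ≠ 0 := by
    intro q hq
    have := hφ0 _ hq
    positivity
  have ws : ∀ q ∈ {q : Fin 4 → ℝ | (q 0, q 1) ∈ V},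
      J (fun q => (q 3 ^ 2 + φ (q 0, q 1) ^ 2)⁻¹) q
        (-2 * φ (q 0, q 1) * pdx φ (q 0, q 1) * ((q 3 ^ 2 + φ (q 0, q 1) ^ 2)⁻¹) ^ 2)
        (-2 * φ (q 0, q 1) * pdy φ (q 0, q 1) * ((q 3 ^ 2 + φ (q 0, q 1) ^ 2)⁻¹) ^ 2)
        (-2 * q 3 * ((q 3 ^ 2 + φ (q 0, q 1) ^ 2)⁻¹) ^ 2) := by
    intro q hq
    refine J.congr_val (J.inv (J.add (J.sq J_coord3) (J.sq (wf00 q hq))) (hS0 q hq))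
      ?_ ?_ ?_ <;> ring
  have hg' : ∀ q, g q = kmet
      (-2 * φ (q 0, q 1) ^ 2 * ((1 + κ * (q 0 ^ 2 + q 1 ^ 2))⁻¹) ^ 2 * κ
        - 2 * q 3 ^ 2 * ((1 + κ * (q 0 ^ 2 + q 1 ^ 2))⁻¹) ^ 2 * κ)
      (-(1/2) + (1/2) * (kc * m) * q 3 * (q 3 ^ 2 + φ (q 0, q 1) ^ 2)⁻¹)
      (pdx φ (q 0, q 1)) (pdy φ (q 0, q 1)) := by
    intro q
    ext A B
    rw [hg, hω, hω, hθ]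
    fin_cases A <;> fin_cases B <;> simp [kmet, ksym, div_eq_mul_inv] <;> ring
  have hG : ∀ q ∈ {q : Fin 4 → ℝ | (q 0, q 1) ∈ V},
      -2 * φ (q 0, q 1) ^ 2 * ((1 + κ * (q 0 ^ 2 + q 1 ^ 2))⁻¹) ^ 2 * κ
        - 2 * q 3 ^ 2 * ((1 + κ * (q 0 ^ 2 + q 1 ^ 2))⁻¹) ^ 2 * κ ≠ 0 := by
    intro q hq
    have h1 := hS0 q hq
    have h2 : (1 + κ * (q 0 ^ 2 + q 1 ^ 2))⁻¹ ≠ 0 := inv_ne_zero (hPpos _ hq).ne'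
    have h3 := mul_ne_zero (mul_ne_zero (mul_ne_zero (two_ne_zero (α := ℝ)) hκ0)
      (pow_ne_zero 2 h2)) h1
    intro h
    exact h3 (by linear_combination -h)
  have hp2 : ∀ q ∈ {q : Fin 4 → ℝ | (q 0, q 1) ∈ V}, pdy (pdy φ) (q 0, q 1) =
      -8 * κ * φ (q 0, q 1) * ((1 + κ * (q 0 ^ 2 + q 1 ^ 2))⁻¹) ^ 2
        - pdx (pdx φ) (q 0, q 1) := by
    intro q hq
    have := hpde _ hq
    simp only [lap, div_eq_mul_inv] at this
    rw [← inv_pow] at this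
    linear_combination this
  have hK := kerr_jets (κ := κ) (K := kc * m) hU hg' hG wu ws wf00 wf01 wf02 wf10 wf11 wf20
  intro p hp
  refine ⟨IsUnit.of_mul_eq_one _ (kj_mul hK hp), fun A B => ?_⟩
  have hR : J (fun q : Fin 4 → ℝ => -8 * κ * φ (q 0, q 1) *
      ((1 + κ * (q 0 ^ 2 + q 1 ^ 2))⁻¹) ^ 2 - pdx (pdx φ) (q 0, q 1)) p _ _ _ :=
    J.sub (J.mul (J.mul (J.const (-8 * κ)) (wf00 p hp)) (J.sq (wu p hp))) (wf20 p hp)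
  have hL := hR.congr_fun
    (Filter.eventually_of_mem (hU.mem_nhds hp) fun q hq => hp2 q hq)
  have h3 := (wf02 p hp).2.1.symm.trans hL.2.1
  have h4 := (wf02 p hp).2.2.1.symm.trans hL.2.2.1
  have hz := kerr_alg κ (kc * m) (p 0) (p 1) (p 3) _ _ _ _ _ (φ (p 0, p 1))
    (pdy φ (p 0, p 1)) (pdy (pdy φ) (p 0, p 1)) (pdy (pdy (pdy φ)) (p 0, p 1))
    (pdx φ (p 0, p 1)) (pdy (pdx φ) (p 0, p 1)) (pdy (pdy (pdx φ)) (p 0, p 1))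
    (pdx (pdx φ) (p 0, p 1)) (pdy (pdx (pdx φ)) (p 0, p 1)) (pdx (pdx (pdx φ)) (p 0, p 1))
    hκ (hPpos _ hp).ne' (hS0 p hp) rfl rfl rfl rfl rfl (hp2 p hp)
    (by linear_combination h3) (by linear_combination h4)
  rw [kj_R hK hp A B]
  refine Finset.sum_eq_zero fun i _ => Finset.sum_eq_zero fun j _ => ?_
  have hij := congrFun (congrFun hz i) j
  exact mul_eq_zero_of_right _ hij
end

section
/- Let V ⊆ ℝ² be a bounded open set whose closure is contained in 𝔻, and let φ be a real-valued function that is continuous on the closure of V, twice differentiable on V, and satisfies Δφ = 8·φ/(1 − x² − y²)² at every point of V. If φ ≥ 0 at every point of the topological frontier of V, then φ ≥ 0 on the closure of V; and if moreover V is connected and φ is strictly positive at some point of the frontier of V, then φ > 0 at every point of V. -/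
theorem mp_oneD (g g1 : ℝ → ℝ) (g2 : ℝ) (h1 : ∀ᶠ t in nhds (0:ℝ), HasDerivAt g (g1 t) t)
    (h2 : HasDerivAt g1 g2 0) (hm : IsLocalMin g 0) : 0 ≤ g2 := by
  by_contra hneg
  push Not at hneg
  have e1 : deriv g =ᶠ[nhds 0] g1 := h1.mono fun t ht => ht.deriv
  have e2 : deriv (deriv g) 0 = g2 := by rw [e1.deriv_eq]; exact h2.deriv
  have hmax : IsLocalMax g 0 :=
    isLocalMax_of_deriv_deriv_neg (by rw [e2]; exact hneg) hm.deriv_eq_zero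
      h1.self_of_nhds.continuousAt
  have hconst : g =ᶠ[nhds 0] fun _ => g 0 := by
    filter_upwards [hm, hmax] with t a b
    exact le_antisymm b a
  have e3 : deriv g =ᶠ[nhds 0] deriv (fun _ => g 0) := hconst.deriv
  have e4 : deriv (deriv g) 0 = 0 := by
    rw [e3.deriv_eq]; simp
  linarith

theorem mp_dir (f : ℝ × ℝ → ℝ) (m e : ℝ × ℝ) (W W1 : ℝ → ℝ) (W2 : ℝ)
    (hf : ∀ᶠ p in nhds m, DifferentiableAt ℝ f p)
    (hf2 : DifferentiableAt ℝ (fun p => fderiv ℝ f p e) m)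
    (hW : ∀ t, HasDerivAt W (W1 t) t) (hW1 : HasDerivAt W1 W2 0)
    (hm : IsLocalMin (fun t : ℝ => f (m + t • e) - W t) 0) :
    W2 ≤ fderiv ℝ (fun p => fderiv ℝ f p e) m e := by
  have hl : ∀ t : ℝ, HasDerivAt (fun t : ℝ => m + t • e) e t := by
    intro t
    simpa using ((hasDerivAt_id t).smul_const e).const_add m
  have hcont : Filter.Tendsto (fun t : ℝ => m + t • e) (nhds 0) (nhds m) := by
    have := (hl 0).continuousAt.tendsto
    simpa using this
  have := mp_oneD (fun t : ℝ => f (m + t • e) - W t)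
    (fun t => fderiv ℝ f (m + t • e) e - W1 t)
    (fderiv ℝ (fun p => fderiv ℝ f p e) m e - W2) ?_ ?_ hm
  · linarith
  · filter_upwards [hcont.eventually hf] with t ht
    exact (ht.hasFDerivAt.comp_hasDerivAt t (hl t)).sub (hW t)
  · have h0 : HasFDerivAt (fun p => fderiv ℝ f p e)
        (fderiv ℝ (fun p => fderiv ℝ f p e) m) (m + (0:ℝ) • e) := by
      simpa using hf2.hasFDerivAt
    exact (h0.comp_hasDerivAt (0:ℝ) (hl 0)).sub hW1

/-- Second derivative test against a polynomial comparison function. -/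
theorem mp_lap (f : ℝ × ℝ → ℝ) (m q z : ℝ × ℝ) (ε K : ℝ)
    (hf : ∀ᶠ p in nhds m, DifferentiableAt ℝ f p)
    (hx : DifferentiableAt ℝ (pdx f) m) (hy : DifferentiableAt ℝ (pdy f) m)
    (s : ℝ × ℝ → ℝ)
    (hs : s = fun p => (p.1 - q.1) * (z.1 - p.1) + (p.2 - q.2) * (z.2 - p.2))
    (hm : IsLocalMin (fun p => f p - ε * (s p + K * s p ^ 2)) m) :
    ε * (-4 * (1 + 2 * K * s m) +
      2 * K * ((z.1 + q.1 - 2 * m.1) ^ 2 + (z.2 + q.2 - 2 * m.2) ^ 2)) ≤ lap f m := by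
  have hcont : ∀ e : ℝ × ℝ, Filter.Tendsto (fun t : ℝ => m + t • e) (nhds 0) (nhds m) := by
    intro e
    have : Continuous (fun t : ℝ => m + t • e) := by fun_prop
    simpa using this.tendsto 0
  have hloc : ∀ e : ℝ × ℝ, IsLocalMin (fun t : ℝ => f (m + t • e) -
      ε * (s (m + t • e) + K * s (m + t • e) ^ 2)) 0 := by
    intro e
    have := (hcont e).eventually hm
    filter_upwards [this] with t ht
    simpa using ht
  have key : ∀ (b c d a : ℝ), ∃ S1 : ℝ → ℝ, True ∧
      (∀ t, HasDerivAt (fun t : ℝ => ε * (((a + t - b) * (c - (a + t)) + d) +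
        K * ((a + t - b) * (c - (a + t)) + d) ^ 2)) (S1 t) t) ∧
      HasDerivAt S1 (ε * (-2 * (1 + 2 * K * ((a - b) * (c - a) + d)) +
        2 * K * (c + b - 2 * a) ^ 2)) 0 := by
    intro b c d a
    have hS : ∀ t : ℝ, HasDerivAt (fun t : ℝ => (a + t - b) * (c - (a + t)) + d)
        (c + b - 2 * (a + t)) t := by
      intro t
      have h1 : HasDerivAt (fun t : ℝ => a + t) 1 t := (hasDerivAt_id t).const_add a
      have := (((h1.sub_const b).mul (h1.const_sub c)).add_const d)
      refine this.congr_deriv ?_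
      ring
    refine ⟨fun t => ε * ((c + b - 2 * (a + t)) *
      (1 + 2 * K * ((a + t - b) * (c - (a + t)) + d))), trivial, ?_, ?_⟩
    · intro t
      have := ((hS t).add (((hS t).pow 2).const_mul K)).const_mul ε
      refine this.congr_deriv ?_
      push_cast
      ring
    · have h1 : HasDerivAt (fun t : ℝ => a + t) 1 0 := (hasDerivAt_id (0:ℝ)).const_add a
      have h2 := ((h1.const_mul 2).const_sub (c + b))
      have h3 := (((hS 0).const_mul (2 * K)).const_add 1)
      refine ((h2.mul h3).const_mul ε).congr_deriv ?_
      push_cast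
      ring
  obtain ⟨S1, -, a1, a2⟩ := key q.1 z.1 ((m.2 - q.2) * (z.2 - m.2)) m.1
  obtain ⟨S2, -, b1, b2⟩ := key q.2 z.2 ((m.1 - q.1) * (z.1 - m.1)) m.2
  have i1 := mp_dir f m (1, 0) _ S1 _ hf hx a1 a2 (by
    have := hloc (1, 0)
    simpa [hs] using this)
  have i2 := mp_dir f m (0, 1) _ S2 _ hf hy b1 b2 (by
    have := hloc (0, 1)
    simpa [hs, add_comm, add_left_comm] using this)
  have e : lap f m = fderiv ℝ (fun p => fderiv ℝ f p (1, 0)) m (1, 0) +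
    fderiv ℝ (fun p => fderiv ℝ f p (0, 1)) m (0, 1) := rfl
  rw [e, hs]
  dsimp only
  linarith

/-- The touching argument (Hopf). -/
theorem mp_touch (V : Set (ℝ × ℝ)) (hVo : IsOpen V)
    (hVD : V ⊆ {p : ℝ × ℝ | p.1 ^ 2 + p.2 ^ 2 < 1})
    (φ : ℝ × ℝ → ℝ)
    (hd : ∀ p ∈ V, DifferentiableAt ℝ φ p ∧
      DifferentiableAt ℝ (pdx φ) p ∧ DifferentiableAt ℝ (pdy φ) p)
    (hpde : ∀ p ∈ V, lap φ p = 8 * φ p / (1 - p.1 ^ 2 - p.2 ^ 2) ^ 2)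
    (hnn : ∀ p ∈ V, 0 ≤ φ p) (q z : ℝ × ℝ) (hz : z ∈ V) (hz0 : φ z = 0)
    (hN : 0 < (z.1 - q.1) ^ 2 + (z.2 - q.2) ^ 2)
    (hpos : ∀ x, (x.1 - q.1) ^ 2 + (x.2 - q.2) ^ 2 < (z.1 - q.1) ^ 2 + (z.2 - q.2) ^ 2 →
      0 < φ x) : False := by
  set A := (z.1 - q.1) ^ 2 + (z.2 - q.2) ^ 2 with hA
  obtain ⟨K, hK⟩ : ∃ K, K = 4 / A := ⟨_, rfl⟩
  have hKpos : 0 < K := by rw [hK]; positivity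
  have hKA : K * A = 4 := by rw [hK]; field_simp
  obtain ⟨s, hs⟩ : ∃ s : ℝ × ℝ → ℝ,
    s = fun p => (p.1 - q.1) * (z.1 - p.1) + (p.2 - q.2) * (z.2 - p.2) := ⟨_, rfl⟩
  have hsc : Continuous s := by rw [hs]; fun_prop
  have hsz : s z = 0 := by simp [hs]
  have hspos : ∀ x, 0 ≤ s x → x ≠ z → 0 < φ x := by
    intro x hx hxz
    apply hpos
    have : 0 < (z.1 - x.1) ^ 2 + (z.2 - x.2) ^ 2 := by
      by_contra hcon
      apply hxz
      have h1 : z.1 - x.1 = 0 := by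
        nlinarith [sq_nonneg (z.1 - x.1), sq_nonneg (z.2 - x.2)]
      have h2 : z.2 - x.2 = 0 := by
        nlinarith [sq_nonneg (z.1 - x.1), sq_nonneg (z.2 - x.2)]
      exact Prod.ext (by linarith) (by linarith)
    rw [hs] at hx
    dsimp only at hx
    rw [hA]
    nlinarith
  obtain ⟨w, hw⟩ : ∃ w : ℝ × ℝ → ℝ, w = fun p => s p + K * s p ^ 2 := ⟨_, rfl⟩
  have hwc : Continuous w := by rw [hw]; fun_prop
  obtain ⟨c, hcdef⟩ : ∃ c : ℝ × ℝ → ℝ,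
    c = fun p => 8 / (1 - p.1 ^ 2 - p.2 ^ 2) ^ 2 := ⟨_, rfl⟩
  obtain ⟨G, hG⟩ : ∃ G : ℝ × ℝ → ℝ, G = fun m => -4 * (1 + 2 * K * s m) +
      2 * K * ((z.1 + q.1 - 2 * m.1) ^ 2 + (z.2 + q.2 - 2 * m.2) ^ 2) := ⟨_, rfl⟩
  have hGc : Continuous G := by rw [hG]; fun_prop
  have hcc : ContinuousAt c z := by
    rw [hcdef]
    have : (1 - z.1 ^ 2 - z.2 ^ 2) ^ 2 ≠ 0 := by
      have := hVD hz
      simp only [Set.mem_setOf_eq] at this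
      have : 0 < 1 - z.1 ^ 2 - z.2 ^ 2 := by linarith
      positivity
    exact ContinuousAt.div (by fun_prop) (by fun_prop) this
  have hGz : 0 < G z - c z * w z := by
    have h1 : w z = 0 := by simp [hw, hsz]
    have h2 : G z = -4 + 2 * (K * A) := by
      rw [hG, hA]; dsimp only; rw [hsz]; ring
    rw [h1, h2, hKA]; norm_num
  have ev1 : ∀ᶠ x in nhds z, 0 < G x - c x * w x :=
    (hGc.continuousAt.sub (hcc.mul hwc.continuousAt)).eventually (lt_mem_nhds hGz)
  have ev2 : ∀ᶠ x in nhds z, -1 / K < s x := by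
    apply hsc.continuousAt.eventually (lt_mem_nhds _)
    rw [hsz]
    exact div_neg_of_neg_of_pos (by norm_num) hKpos
  obtain ⟨δ, hδ, hball⟩ := Metric.nhds_basis_closedBall.eventually_iff.1
    ((ev1.and ev2).and (hVo.mem_nhds hz))
  have hφc : ∀ x ∈ Metric.closedBall z δ, ContinuousAt φ x := fun x hx =>
    (hd x (hball hx).2).1.continuousAt
  have hwneg : ∀ x ∈ Metric.closedBall z δ, s x < 0 → w x < 0 := by
    intro x hx hsx
    have := (hball hx).1.2
    rw [div_lt_iff₀ hKpos] at this
    rw [hw]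
    dsimp only
    nlinarith
  -- choice of ε
  obtain ⟨ε, hε, hεs⟩ : ∃ ε : ℝ, 0 < ε ∧
      ∀ x ∈ Metric.sphere z δ, 0 < φ x - ε * w x := by
    have hcomp : IsCompact (Metric.sphere z δ ∩ {x | 0 ≤ s x}) :=
      (isCompact_sphere z δ).inter_right (isClosed_le continuous_const hsc)
    have hne : ∀ x ∈ Metric.sphere z δ, x ≠ z := by
      rintro x hx rfl
      simp at hx
      linarith
    obtain ⟨ε, hε, h⟩ : ∃ ε : ℝ, 0 < ε ∧
        ∀ x ∈ Metric.sphere z δ ∩ {x | 0 ≤ s x}, 0 < φ x - ε * w x := by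
      rcases (Metric.sphere z δ ∩ {x | 0 ≤ s x}).eq_empty_or_nonempty with he | hnon
      · exact ⟨1, one_pos, by simp [he]⟩
      · obtain ⟨a, ha, hamin⟩ := hcomp.exists_isMinOn hnon
          (f := φ) (fun x hx => (hφc x (Metric.sphere_subset_closedBall hx.1)).continuousWithinAt)
        obtain ⟨b, hb, hbmax⟩ := hcomp.exists_isMaxOn hnon hwc.continuousOn
        have hφa : 0 < φ a := hspos a ha.2 (hne a ha.1)
        have hb' : 0 < |w b| + 1 := by positivity
        refine ⟨φ a / (|w b| + 1), by positivity, ?_⟩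
        intro x hx
        have h1 : φ a ≤ φ x := hamin hx
        have h2 : w x ≤ w b := hbmax hx
        have h3 : w x < |w b| + 1 := by linarith [le_abs_self (w b)]
        have h4 : φ a / (|w b| + 1) * w x < φ a / (|w b| + 1) * (|w b| + 1) :=
          mul_lt_mul_of_pos_left h3 (by positivity)
        rw [div_mul_cancel₀ _ hb'.ne'] at h4
        linarith
    refine ⟨ε, hε, fun x hx => ?_⟩
    by_cases hsx : 0 ≤ s x
    · exact h x ⟨hx, hsx⟩
    · have hx' := Metric.sphere_subset_closedBall hx
      have h1 := hwneg x hx' (not_le.1 hsx)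
      have h2 := hnn x (hball hx').2
      nlinarith [mul_pos hε (neg_pos.2 h1)]
  obtain ⟨m, hm, hmin⟩ := (isCompact_closedBall z δ).exists_isMinOn
    ⟨z, Metric.mem_closedBall_self hδ.le⟩ (f := fun x => φ x - ε * w x)
    (fun x hx => ((hφc x hx).sub (hwc.continuousAt.const_mul ε)).continuousWithinAt)
  have hmz : φ m - ε * w m ≤ 0 := by
    have : φ m - ε * w m ≤ φ z - ε * w z := hmin (Metric.mem_closedBall_self hδ.le)
    have h1 : w z = 0 := by simp [hw, hsz]
    rw [hz0, h1] at this
    linarith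
  have hmb : m ∈ Metric.ball z δ := by
    rw [Metric.mem_ball]
    refine lt_of_le_of_ne hm fun h => ?_
    have := hεs m h
    linarith
  have hloc : IsLocalMin (fun p => φ p - ε * (s p + K * s p ^ 2)) m := by
    have := hmin.isLocalMin (Filter.mem_of_superset (Metric.isOpen_ball.mem_nhds hmb)
      Metric.ball_subset_closedBall)
    rw [hw] at this
    exact this
  have hmV := (hball hm).2
  have hl := mp_lap φ m q z ε K
    (Filter.mem_of_superset (hVo.mem_nhds hmV) fun p hp => (hd p hp).1)
    (hd m hmV).2.1 (hd m hmV).2.2 s hs hloc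
  have hl' : ε * G m ≤ c m * φ m := by
    have h1 : c m * φ m = lap φ m := by rw [hpde m hmV, hcdef]; ring
    rw [h1, hG]
    exact hl
  have hcm : 0 ≤ c m := by rw [hcdef]; positivity
  have h5 : 0 < ε * (G m - c m * w m) := mul_pos hε (hball hm).1.1
  nlinarith

/-- Maximum-principle positivity for solutions of `Δφ = 8φ/(1 − x² − y²)²` on bounded open
sets compactly contained in the unit disk. -/
theorem maximum_principle_kappa_neg_one
    (V : Set (ℝ × ℝ)) (hVo : IsOpen V) (hVb : Bornology.IsBounded V)
    (hVD : closure V ⊆ {p : ℝ × ℝ | p.1 ^ 2 + p.2 ^ 2 < 1})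
    (φ : ℝ × ℝ → ℝ)
    (hc : ContinuousOn φ (closure V))
    (hd : ∀ p ∈ V, DifferentiableAt ℝ φ p ∧
      DifferentiableAt ℝ (pdx φ) p ∧ DifferentiableAt ℝ (pdy φ) p)
    (hpde : ∀ p ∈ V, lap φ p = 8 * φ p / (1 - p.1 ^ 2 - p.2 ^ 2) ^ 2)
    (hbd : ∀ p ∈ frontier V, 0 ≤ φ p) :
    (∀ p ∈ closure V, 0 ≤ φ p) ∧
      (IsConnected V → (∃ p ∈ frontier V, 0 < φ p) → ∀ p ∈ V, 0 < φ p) := by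
  have hcomp : IsCompact (closure V) := hVb.isCompact_closure
  have hlt : ∀ p ∈ V, 0 < 1 - p.1 ^ 2 - p.2 ^ 2 := by
    intro p hp
    have := hVD (subset_closure hp)
    simp only [Set.mem_setOf_eq] at this
    linarith
  have part1 : ∀ p ∈ closure V, 0 ≤ φ p := by
    intro p hp
    obtain ⟨m, hm, hmin⟩ := hcomp.exists_isMinOn ⟨p, hp⟩ hc
    have hmp : φ m ≤ φ p := hmin hp
    by_contra hneg
    have hm0 : φ m < 0 := by linarith
    have hmV : m ∈ V := by
      by_contra hmV
      have : m ∈ frontier V := by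
        rw [hVo.frontier_eq]; exact ⟨hm, hmV⟩
      linarith [hbd m this]
    have hloc : IsLocalMin φ m :=
      hmin.isLocalMin (Filter.mem_of_superset (hVo.mem_nhds hmV) subset_closure)
    have hl := mp_lap φ m 0 0 0 0
      (Filter.mem_of_superset (hVo.mem_nhds hmV) fun p hp => (hd p hp).1)
      (hd m hmV).2.1 (hd m hmV).2.2 _ rfl (by simpa using hloc)
    rw [hpde m hmV, zero_mul] at hl
    have hpos := hlt m hmV
    have : 8 * φ m / (1 - m.1 ^ 2 - m.2 ^ 2) ^ 2 < 0 :=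
      div_neg_of_neg_of_pos (by linarith) (by positivity)
    linarith
  refine ⟨part1, ?_⟩
  rintro hconn ⟨b, hb, hb0⟩
  have hnn : ∀ p ∈ V, 0 ≤ φ p := fun p hp => part1 p (subset_closure hp)
  have hopenZ : ∀ p ∈ V, φ p = 0 → ∀ᶠ x in nhds p, x ∈ V ∧ φ x = 0 := by
    intro p hp hp0
    obtain ⟨δ, hδ, hball⟩ := Metric.nhds_basis_closedBall.mem_iff.1 (hVo.mem_nhds hp)
    have hev : Metric.ball p (δ / 4) ∈ nhds p := Metric.ball_mem_nhds p (by linarith)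
    filter_upwards [hev] with q hq
    have hqV : q ∈ V := hball (Metric.ball_subset_closedBall
      (Metric.ball_subset_ball (by linarith) hq))
    refine ⟨hqV, ?_⟩
    by_contra hq0
    have hScomp : IsCompact (Metric.closedBall p δ ∩ φ ⁻¹' {0}) := by
      have hcl : IsClosed (Metric.closedBall p δ ∩ φ ⁻¹' {0}) :=
        ContinuousOn.preimage_isClosed_of_isClosed
          (hc.mono (hball.trans subset_closure)) Metric.isClosed_closedBall isClosed_singleton
      exact (isCompact_closedBall p δ).of_isClosed_subset hcl Set.inter_subset_left
    have hpS : p ∈ Metric.closedBall p δ ∩ φ ⁻¹' {0} :=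
      ⟨Metric.mem_closedBall_self hδ.le, hp0⟩
    obtain ⟨z, hz, hzmin⟩ := hScomp.exists_isMinOn ⟨p, hpS⟩
      (f := fun x : ℝ × ℝ => (x.1 - q.1) ^ 2 + (x.2 - q.2) ^ 2) (by fun_prop)
    have hzp : (z.1 - q.1) ^ 2 + (z.2 - q.2) ^ 2 ≤ (p.1 - q.1) ^ 2 + (p.2 - q.2) ^ 2 :=
      hzmin hpS
    have hz0 : φ z = 0 := hz.2
    rw [Metric.mem_ball, Prod.dist_eq, max_lt_iff, Real.dist_eq, Real.dist_eq, abs_lt,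
      abs_lt] at hq
    obtain ⟨⟨q1, q2⟩, q3, q4⟩ := hq
    have hq1 : (p.1 - q.1) ^ 2 ≤ (δ / 4) ^ 2 := by
      rw [sq_le_sq, abs_of_pos (by linarith : 0 < δ / 4), abs_le]
      constructor <;> linarith
    have hq2 : (p.2 - q.2) ^ 2 ≤ (δ / 4) ^ 2 := by
      rw [sq_le_sq, abs_of_pos (by linarith : 0 < δ / 4), abs_le]
      constructor <;> linarith
    refine mp_touch V hVo (subset_closure.trans hVD) φ hd hpde hnn q z (hball hz.1) hz0 ?_ ?_
    · by_contra hcon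
      apply hq0
      have h1 : z.1 - q.1 = 0 := by
        nlinarith [sq_nonneg (z.1 - q.1), sq_nonneg (z.2 - q.2)]
      have h2 : z.2 - q.2 = 0 := by
        nlinarith [sq_nonneg (z.1 - q.1), sq_nonneg (z.2 - q.2)]
      have : q = z := Prod.ext (by linarith) (by linarith)
      rw [this, hz0]
    · intro x hx
      have hx1 : |x.1 - q.1| ≤ δ / 2 := by
        apply abs_le_of_sq_le_sq _ (by linarith)
        nlinarith [sq_nonneg (x.2 - q.2)]
      have hx2 : |x.2 - q.2| ≤ δ / 2 := by
        apply abs_le_of_sq_le_sq _ (by linarith)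
        nlinarith [sq_nonneg (x.1 - q.1)]
      rw [abs_le] at hx1 hx2
      have hxb : x ∈ Metric.closedBall p δ := by
        rw [Metric.mem_closedBall, Prod.dist_eq, max_le_iff, Real.dist_eq, Real.dist_eq,
          abs_le, abs_le]
        refine ⟨⟨?_, ?_⟩, ?_, ?_⟩ <;> linarith [hx1.1, hx1.2, hx2.1, hx2.2]
      refine lt_of_le_of_ne (hnn x (hball hxb)) fun h => ?_
      have h2 : (z.1 - q.1) ^ 2 + (z.2 - q.2) ^ 2 ≤ (x.1 - q.1) ^ 2 + (x.2 - q.2) ^ 2 :=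
        hzmin ⟨hxb, h.symm⟩
      linarith
  intro p hp
  refine lt_of_le_of_ne (hnn p hp) fun h => ?_
  -- the zero set is all of V
  have hU : IsOpen {x | x ∈ V ∧ φ x = 0} :=
    isOpen_iff_mem_nhds.2 fun x hx => hopenZ x hx.1 hx.2
  have hU' : IsOpen {x | x ∈ V ∧ φ x ≠ 0} := by
    refine isOpen_iff_mem_nhds.2 fun x hx => ?_
    exact Filter.inter_mem (hVo.mem_nhds hx.1)
      ((hd x hx.1).1.continuousAt.eventually_ne hx.2)
  have hall : ∀ x ∈ V, φ x = 0 := by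
    intro x hx
    by_contra hx0
    obtain ⟨y, -, hy1, hy2⟩ := hconn.isPreconnected _ _ hU hU'
      (fun y hy => (em (φ y = 0)).imp (fun h => ⟨hy, h⟩) (fun h => ⟨hy, h⟩))
      ⟨p, hp, hp, h.symm⟩ ⟨x, hx, hx, hx0⟩
    exact hy2.2 hy1.2
  have hbc : b ∈ closure V := frontier_subset_closure hb
  have : φ b ∈ closure ({0} : Set ℝ) := by
    have h1 := hc.image_closure (s := V) ⟨b, hbc, rfl⟩
    refine closure_mono ?_ h1
    rintro _ ⟨x, hx, rfl⟩
    exact hall x hx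
  rw [closure_singleton] at this
  have : φ b = 0 := this
  linarith
end

section
/- Let V ⊆ ℝ² be a bounded open set whose closure is contained in 𝔻, and let φ be a real-valued function that is continuous on the closure of V, twice differentiable on V, and satisfies Δφ + 8·φ/(1 + x² + y²)² = 0 at every point of V. If φ ≤ 0 at every point of the topological frontier of V, then φ ≤ 0 on the closure of V; and if moreover V is connected and φ is strictly negative at some point of the frontier of V, then φ < 0 at every point of V. -/
open Set Filter Topology

lemma second_deriv_nonpos {f f' : ℝ → ℝ} {t a : ℝ}
    (h1 : ∀ᶠ x in 𝓝 t, HasDerivAt f (f' x) x) (h2 : HasDerivAt f' a t)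
    (hm : IsLocalMax f t) : a ≤ 0 := by
  by_contra! ha
  have hd : deriv f =ᶠ[𝓝 t] f' := h1.mono fun x hx => hx.deriv
  have hdd : deriv (deriv f) t = a := by rw [hd.deriv_eq, h2.deriv]
  have hmin : IsLocalMin f t :=
    isLocalMin_of_deriv_deriv_pos (by rw [hdd]; exact ha) hm.deriv_eq_zero
      h1.self_of_nhds.continuousAt
  have hconst : f =ᶠ[𝓝 t] fun _ => f t := by
    filter_upwards [hm, hmin] with x hx hy using le_antisymm hx hy
  have h3 : deriv (deriv f) t = 0 := by
    have h4 : deriv f =ᶠ[𝓝 t] deriv (fun _ => f t) := hconst.deriv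
    rw [h4.deriv_eq]; simp
  linarith

/-- squared Euclidean distance -/
def sqd (q p : ℝ × ℝ) : ℝ := (p.1 - q.1) ^ 2 + (p.2 - q.2) ^ 2

lemma continuous_sqd (q : ℝ × ℝ) : Continuous (sqd q) := by
  unfold sqd; fun_prop

lemma aux_deriv1 (A B E k a : ℝ) (x : ℝ) (hx : k + (x - a) ^ 2 ≠ 0) :
    HasDerivAt (fun t => A / (k + (t - a) ^ 2) + B + E * (k + (t - a) ^ 2))
      (-(2 * A * (x - a)) / (k + (x - a) ^ 2) ^ 2 + 2 * E * (x - a)) x := by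
  have h0 : HasDerivAt (fun t => k + (t - a) ^ 2) (2 * (x - a)) x := by
    have := (((hasDerivAt_id x).sub_const a).pow 2).const_add k
    simpa using this
  have := (((hasDerivAt_const x A).div h0 hx).add_const B).add (h0.const_mul E)
  refine this.congr_deriv ?_
  field_simp
  ring

lemma aux_deriv2 (A E k a : ℝ) (x : ℝ) (hx : k + (x - a) ^ 2 ≠ 0) :
    HasDerivAt (fun t => -(2 * A * (t - a)) / (k + (t - a) ^ 2) ^ 2 + 2 * E * (t - a))
      (-(2 * A) / (k + (x - a) ^ 2) ^ 2 + 8 * A * (x - a) ^ 2 / (k + (x - a) ^ 2) ^ 3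
        + 2 * E) x := by
  have h0 : HasDerivAt (fun t => k + (t - a) ^ 2) (2 * (x - a)) x := by
    have := (((hasDerivAt_id x).sub_const a).pow 2).const_add k
    simpa using this
  have h1 : HasDerivAt (fun t => t - a) 1 x := (hasDerivAt_id x).sub_const a
  have := (((h1.const_mul (2 * A)).neg).div (h0.pow 2) (pow_ne_zero 2 hx)).add
    (h1.const_mul (2 * E))
  refine this.congr_deriv ?_
  simp only [Pi.pow_apply, Pi.neg_apply]
  field_simp
  ring

lemma slice_x {f : ℝ × ℝ → ℝ} {p : ℝ × ℝ} (h : DifferentiableAt ℝ f p) :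
    HasDerivAt (fun t => f (t, p.2)) (pdx f p) p.1 := by
  have h1 : HasDerivAt (fun t : ℝ => (t, p.2)) ((1 : ℝ), (0 : ℝ)) p.1 :=
    (hasDerivAt_id p.1).prodMk (hasDerivAt_const p.1 p.2)
  exact HasFDerivAt.comp_hasDerivAt (f := fun t : ℝ => (t, p.2)) p.1 h.hasFDerivAt h1

lemma slice_y {f : ℝ × ℝ → ℝ} {p : ℝ × ℝ} (h : DifferentiableAt ℝ f p) :
    HasDerivAt (fun t => f (p.1, t)) (pdy f p) p.2 := by
  have h1 : HasDerivAt (fun t : ℝ => (p.1, t)) ((0 : ℝ), (1 : ℝ)) p.2 :=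
    (hasDerivAt_const p.2 p.1).prodMk (hasDerivAt_id p.2)
  exact HasFDerivAt.comp_hasDerivAt (f := fun t : ℝ => (p.1, t)) p.2 h.hasFDerivAt h1

lemma lap_test {V : Set (ℝ × ℝ)} (hVo : IsOpen V) {φ : ℝ × ℝ → ℝ}
    (hd : ∀ p ∈ V, DifferentiableAt ℝ φ p ∧
      DifferentiableAt ℝ (pdx φ) p ∧ DifferentiableAt ℝ (pdy φ) p)
    {p : ℝ × ℝ} (hp : p ∈ V) (A B E c : ℝ) (q : ℝ × ℝ) (hne : c + sqd q p ≠ 0)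
    (hm : IsLocalMax (fun z => φ z + (A / (c + sqd q z) + B + E * (c + sqd q z))) p) :
    lap φ p + 4 * A * (sqd q p - c) / (c + sqd q p) ^ 3 + 4 * E ≤ 0 := by
  have cx : Tendsto (fun t : ℝ => (t, p.2)) (𝓝 p.1) (𝓝 p) :=
    Continuous.tendsto (f := fun t : ℝ => (t, p.2)) (by fun_prop) p.1
  have cy : Tendsto (fun t : ℝ => (p.1, t)) (𝓝 p.2) (𝓝 p) :=
    Continuous.tendsto (f := fun t : ℝ => (p.1, t)) (by fun_prop) p.2
  have hev : ∀ᶠ z in 𝓝 p, z ∈ V ∧ c + sqd q z ≠ 0 :=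
    (hVo.eventually_mem hp).and
      ((continuous_const.add (continuous_sqd q)).continuousAt.eventually_ne hne)
  have ex : ∀ t : ℝ, c + sqd q (t, p.2) = (c + (p.2 - q.2) ^ 2) + (t - q.1) ^ 2 := by
    intro t; simp only [sqd]; ring
  have ey : ∀ t : ℝ, c + sqd q (p.1, t) = (c + (p.1 - q.1) ^ 2) + (t - q.2) ^ 2 := by
    intro t; simp only [sqd]; ring
  have hx := second_deriv_nonpos
    (f := fun t => φ (t, p.2) + (A / ((c + (p.2 - q.2) ^ 2) + (t - q.1) ^ 2) + B
      + E * ((c + (p.2 - q.2) ^ 2) + (t - q.1) ^ 2)))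
    (f' := fun t => pdx φ (t, p.2) +
      (-(2 * A * (t - q.1)) / ((c + (p.2 - q.2) ^ 2) + (t - q.1) ^ 2) ^ 2 + 2 * E * (t - q.1)))
    (t := p.1) ?_ ((slice_x (hd p hp).2.1).add (aux_deriv2 A E _ q.1 p.1 ?_)) ?_
  rotate_left
  · filter_upwards [cx.eventually hev] with t ht
    have := slice_x (hd _ ht.1).1
    exact this.add (aux_deriv1 A B E _ q.1 t (by rw [← ex]; exact ht.2))
  · rw [← ex]; exact hne
  · have := cx.eventually hm
    filter_upwards [this] with t ht
    rw [← ex, ← ex]; exact ht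
  have hy := second_deriv_nonpos
    (f := fun t => φ (p.1, t) + (A / ((c + (p.1 - q.1) ^ 2) + (t - q.2) ^ 2) + B
      + E * ((c + (p.1 - q.1) ^ 2) + (t - q.2) ^ 2)))
    (f' := fun t => pdy φ (p.1, t) +
      (-(2 * A * (t - q.2)) / ((c + (p.1 - q.1) ^ 2) + (t - q.2) ^ 2) ^ 2 + 2 * E * (t - q.2)))
    (t := p.2) ?_ ((slice_y (hd p hp).2.2).add (aux_deriv2 A E _ q.2 p.2 ?_)) ?_
  rotate_left
  · filter_upwards [cy.eventually hev] with t ht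
    have := slice_y (hd _ ht.1).1
    exact this.add (aux_deriv1 A B E _ q.2 t (by rw [← ey]; exact ht.2))
  · rw [← ey]; exact hne
  · have := cy.eventually hm
    filter_upwards [this] with t ht
    rw [← ey, ← ey]; exact ht
  rw [← ex] at hx
  rw [← ey] at hy
  have e : 4 * A * (sqd q p - c) / (c + sqd q p) ^ 3
      = (-(2 * A) / (c + sqd q p) ^ 2 + 8 * A * (p.1 - q.1) ^ 2 / (c + sqd q p) ^ 3)
      + (-(2 * A) / (c + sqd q p) ^ 2 + 8 * A * (p.2 - q.2) ^ 2 / (c + sqd q p) ^ 3) := by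
    field_simp
    simp only [sqd]
    ring
  rw [e]
  unfold lap
  simp only [Prod.mk.eta] at hx hy
  linarith

lemma weak_part
    (V : Set (ℝ × ℝ)) (hVo : IsOpen V) (hVb : Bornology.IsBounded V)
    (hVD : closure V ⊆ {p : ℝ × ℝ | p.1 ^ 2 + p.2 ^ 2 < 1})
    (φ : ℝ × ℝ → ℝ)
    (hc : ContinuousOn φ (closure V))
    (hd : ∀ p ∈ V, DifferentiableAt ℝ φ p ∧
      DifferentiableAt ℝ (pdx φ) p ∧ DifferentiableAt ℝ (pdy φ) p)
    (hpde : ∀ p ∈ V, lap φ p + 8 * φ p / (1 + p.1 ^ 2 + p.2 ^ 2) ^ 2 = 0)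
    (hbd : ∀ p ∈ frontier V, φ p ≤ 0) : ∀ p ∈ closure V, φ p ≤ 0 := by
  intro p0 hp0
  by_contra! hpos
  have hK : IsCompact (closure V) := hVb.isCompact_closure
  have hs : ∀ p : ℝ × ℝ, sqd 0 p = p.1 ^ 2 + p.2 ^ 2 := by intro p; simp [sqd]
  have hs0 : ∀ p : ℝ × ℝ, 0 ≤ sqd 0 p := by intro p; rw [hs]; positivity
  have hs1 : ∀ p ∈ closure V, sqd 0 p < 1 := by intro p hp; rw [hs]; exact hVD hp
  -- the maximum of r²
  obtain ⟨m, hm, hmax⟩ := hK.exists_isMaxOn ⟨p0, hp0⟩ (continuous_sqd 0).continuousOn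
  obtain ⟨ε, hε, hεm⟩ : ∃ ε : ℝ, 0 < ε ∧ 2 * ε = 1 - sqd 0 m :=
    ⟨(1 - sqd 0 m) / 2, by linarith [hs1 m hm], by ring⟩
  let g : ℝ × ℝ → ℝ := fun p => 2 / (1 + sqd 0 p) - 1 - ε / 2 * sqd 0 p
  have hg : ∀ p ∈ closure V, 0 < g p := by
    intro p hp
    have h1 := hs0 p
    have h2 : sqd 0 p ≤ sqd 0 m := hmax hp
    have h3 := hs1 p hp
    have h4 : 1 + ε / 2 * sqd 0 p < 2 / (1 + sqd 0 p) := by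
      rw [lt_div_iff₀ (by linarith)]
      nlinarith [mul_nonneg hε.le h1, mul_nonneg (mul_nonneg hε.le h1) h1]
    show 0 < 2 / (1 + sqd 0 p) - 1 - ε / 2 * sqd 0 p
    linarith
  have hgc : Continuous g := by
    have := continuous_sqd 0
    exact ((continuous_const.div (continuous_const.add this)
      (fun p => (by have := hs0 p; positivity : (1:ℝ) + sqd 0 p ≠ 0))).sub continuous_const).sub (continuous_const.mul this)
  obtain ⟨p, hp, hpm⟩ := hK.exists_isMaxOn ⟨p0, hp0⟩
    (hc.div hgc.continuousOn (fun x hx => (hg x hx).ne'))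
  obtain ⟨M, hM⟩ : ∃ M, M = φ p / g p := ⟨_, rfl⟩
  have hM0 : 0 < M := by
    rw [hM]
    exact lt_of_lt_of_le (div_pos hpos (hg p0 hp0)) (hpm hp0)
  have hle : ∀ z ∈ closure V, φ z ≤ M * g z := by
    intro z hz
    have : φ z / g z ≤ φ p / g p := hpm hz
    rw [← hM, div_le_iff₀ (hg z hz)] at this
    exact this
  have heq : φ p = M * g p := by rw [hM, div_mul_cancel₀ _ (hg p hp).ne']
  have hpV : p ∈ V := by
    by_contra hn
    have : p ∈ frontier V := by rw [hVo.frontier_eq]; exact ⟨hp, hn⟩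
    have h1 := hbd p this
    have h2 := mul_pos hM0 (hg p hp)
    linarith
  have key := lap_test hVo hd hpV (-2 * M) (M - M * (ε / 2)) (M * (ε / 2)) 1 0
    (by linarith [hs0 p]) (by
      filter_upwards [hVo.mem_nhds hpV] with z hz
      have h1 := hle z (subset_closure hz)
      have e : ∀ w, (-2 * M / (1 + sqd 0 w) + (M - M * (ε / 2)) + M * (ε / 2) * (1 + sqd 0 w))
          = - (M * g w) := by
        intro w; simp only [g]; ring
      rw [e, e]
      linarith)
  have hp2 := hpde p hpV
  rw [add_assoc 1, ← hs, heq] at hp2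
  have hr := hs0 p
  have hne : 1 + sqd 0 p ≠ 0 := by linarith
  have id : -(8 * (M * g p) / (1 + sqd 0 p) ^ 2) + 4 * (-2 * M) * (sqd 0 p - 1) / (1 + sqd 0 p) ^ 3
      + 4 * (M * (ε / 2)) = M * ε * (4 * sqd 0 p / (1 + sqd 0 p) ^ 2 + 2) := by
    simp only [g]
    field_simp
    ring
  have hpp : 0 < M * ε * (4 * sqd 0 p / (1 + sqd 0 p) ^ 2 + 2) := by positivity
  linarith

lemma sqd_bound {q z : ℝ × ℝ} {r : ℝ} (hr : 0 ≤ r) (h : sqd q z ≤ r ^ 2) : dist z q ≤ r := by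
  unfold sqd at h
  rw [Prod.dist_eq, Real.dist_eq, Real.dist_eq]
  refine max_le (abs_le_of_sq_le_sq ?_ hr) (abs_le_of_sq_le_sq ?_ hr)
  · nlinarith [sq_nonneg (z.2 - q.2)]
  · nlinarith [sq_nonneg (z.1 - q.1)]

lemma sqd_lt {q z : ℝ × ℝ} {r : ℝ} (h : dist z q < r) : sqd q z < 2 * r ^ 2 := by
  rw [Prod.dist_eq, Real.dist_eq, Real.dist_eq, max_lt_iff] at h
  have h1 := sq_lt_sq' (abs_lt.1 h.1).1 (abs_lt.1 h.1).2
  have h2 := sq_lt_sq' (abs_lt.1 h.2).1 (abs_lt.1 h.2).2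
  unfold sqd
  linarith

lemma strong_local {V : Set (ℝ × ℝ)} (hVo : IsOpen V) {φ : ℝ × ℝ → ℝ}
    (hd : ∀ p ∈ V, DifferentiableAt ℝ φ p ∧
      DifferentiableAt ℝ (pdx φ) p ∧ DifferentiableAt ℝ (pdy φ) p)
    (hlap : ∀ p ∈ V, 0 ≤ lap φ p) (hle : ∀ p ∈ V, φ p ≤ 0)
    {q : ℝ × ℝ} {r : ℝ} (hr : 0 < r) (hq : φ q < 0) (hball : ∀ z, sqd q z ≤ r ^ 2 → z ∈ V)
    {p0 : ℝ × ℝ} (hp0 : sqd q p0 < r ^ 2) : φ p0 < 0 := by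
  by_contra! h0
  have hqV : q ∈ V := hball q (by simp [sqd]; positivity)
  have hev : ∀ᶠ z in 𝓝 q, φ z < φ q / 2 :=
    (hd q hqV).1.continuousAt.eventually_lt_const (by linarith)
  obtain ⟨s, hs, hsb⟩ := Metric.eventually_nhds_iff.1 hev
  obtain ⟨σ, hσ, hσs⟩ : ∃ σ : ℝ, 0 < σ ∧ σ < s := exists_between hs
  have hin : ∀ z, sqd q z ≤ σ ^ 2 → φ z < φ q / 2 := fun z hz =>
    hsb (lt_of_le_of_lt (sqd_bound hσ.le hz) hσs)
  have hp0σ : σ ^ 2 < sqd q p0 := by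
    by_contra! h
    linarith [hin p0 h]
  have hσ2 : 0 < σ ^ 2 := by positivity
  let K : Set (ℝ × ℝ) := {z | σ ^ 2 ≤ sqd q z ∧ sqd q z ≤ r ^ 2}
  have hK : IsCompact K := by
    refine (isCompact_closedBall q r).of_isClosed_subset ?_ ?_
    · exact (isClosed_le continuous_const (continuous_sqd q)).inter
        (isClosed_le (continuous_sqd q) continuous_const)
    · intro z hz
      exact sqd_bound hr.le hz.2
  obtain ⟨ε, hε, hεe⟩ : ∃ ε : ℝ, 0 < ε ∧ ε = -(φ q / 2) * σ ^ 2 :=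
    ⟨-(φ q / 2) * σ ^ 2, mul_pos (by linarith) hσ2, rfl⟩
  have hcont : ContinuousOn
      (fun z => φ z + (ε / (0 + sqd q z) + -(ε / r ^ 2) + 0 * (0 + sqd q z))) K := by
    have hs := (continuous_sqd q).continuousOn (s := K)
    have h1 : ContinuousOn (fun z => 0 + sqd q z) K := continuousOn_const.add hs
    refine ContinuousOn.add (fun z hz => (hd z (hball z hz.2)).1.continuousAt.continuousWithinAt) ?_
    refine ((continuousOn_const.div h1 ?_).add continuousOn_const).add (continuousOn_const.mul h1)
    intro z hz
    have := hz.1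
    linarith
  have hp0K : p0 ∈ K := ⟨hp0σ.le, hp0.le⟩
  obtain ⟨p, hp, hpm⟩ := hK.exists_isMaxOn ⟨p0, hp0K⟩ hcont
  have hgt : 0 < φ p + (ε / (0 + sqd q p) + -(ε / r ^ 2) + 0 * (0 + sqd q p)) := by
    refine lt_of_lt_of_le ?_ (hpm hp0K)
    have : ε / r ^ 2 < ε / sqd q p0 := div_lt_div_of_pos_left hε (by linarith) hp0
    simp only [zero_add, zero_mul, add_zero]
    linarith
  have hlow : σ ^ 2 < sqd q p := by
    refine lt_of_le_of_ne hp.1 fun h => ?_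
    have h1 := hin p h.ge
    rw [← h] at hgt
    have h2 : ε / σ ^ 2 = -(φ q / 2) := by rw [hεe]; field_simp
    have h3 : 0 < ε / r ^ 2 := by positivity
    simp only [zero_add, zero_mul, add_zero, h2] at hgt
    linarith
  have hhigh : sqd q p < r ^ 2 := by
    refine lt_of_le_of_ne hp.2 fun h => ?_
    have h1 := hle p (hball p hp.2)
    rw [h] at hgt
    simp only [zero_add, zero_mul, add_zero] at hgt
    linarith
  have hpV := hball p hp.2
  have hpos : 0 < sqd q p := by linarith
  have key := lap_test hVo hd hpV ε (-(ε / r ^ 2)) 0 0 q (by linarith) (by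
    filter_upwards [(isOpen_lt continuous_const (continuous_sqd q)).mem_nhds hlow,
      (isOpen_lt (continuous_sqd q) continuous_const).mem_nhds hhigh] with z h1 h2
    exact hpm (show z ∈ K from ⟨le_of_lt h1, le_of_lt h2⟩))
  have h1 := hlap p hpV
  have h2 : 0 < 4 * ε * (sqd q p - 0) / (0 + sqd q p) ^ 3 := by
    rw [sub_zero, zero_add]; positivity
  linarith

/-- Maximum-principle negativity for solutions of `Δφ + 8φ/(1 + x² + y²)² = 0` on
bounded open sets compactly contained in the unit disk. -/
theorem maximum_principle_kappa_one
    (V : Set (ℝ × ℝ)) (hVo : IsOpen V) (hVb : Bornology.IsBounded V)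
    (hVD : closure V ⊆ {p : ℝ × ℝ | p.1 ^ 2 + p.2 ^ 2 < 1})
    (φ : ℝ × ℝ → ℝ)
    (hc : ContinuousOn φ (closure V))
    (hd : ∀ p ∈ V, DifferentiableAt ℝ φ p ∧
      DifferentiableAt ℝ (pdx φ) p ∧ DifferentiableAt ℝ (pdy φ) p)
    (hpde : ∀ p ∈ V, lap φ p + 8 * φ p / (1 + p.1 ^ 2 + p.2 ^ 2) ^ 2 = 0)
    (hbd : ∀ p ∈ frontier V, φ p ≤ 0) :
    (∀ p ∈ closure V, φ p ≤ 0) ∧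
      (IsConnected V → (∃ p ∈ frontier V, φ p < 0) → ∀ p ∈ V, φ p < 0) := by
  have hw := weak_part V hVo hVb hVD φ hc hd hpde hbd
  refine ⟨hw, ?_⟩
  rintro hconn ⟨b, hb, hbneg⟩
  have hle : ∀ p ∈ V, φ p ≤ 0 := fun p hp => hw p (subset_closure hp)
  have hlap : ∀ p ∈ V, 0 ≤ lap φ p := by
    intro p hp
    have h1 := hpde p hp
    have h2 : 8 * φ p / (1 + p.1 ^ 2 + p.2 ^ 2) ^ 2 ≤ 0 :=
      div_nonpos_of_nonpos_of_nonneg (by linarith [hle p hp]) (by positivity)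
    linarith
  have hcV : ContinuousOn φ V := hc.mono subset_closure
  have hNo : IsOpen (V ∩ φ ⁻¹' Iio 0) := hcV.isOpen_inter_preimage hVo isOpen_Iio
  have hsub : V ⊆ V ∩ φ ⁻¹' Iio 0 := by
    refine hconn.isPreconnected.subset_of_closure_inter_subset hNo ?_ ?_
    · have hbc : b ∈ closure V := hb.1
      have h1 : ∀ᶠ z in 𝓝[V] b, φ z < 0 :=
        ((hc b hbc).mono subset_closure).eventually_lt_const hbneg
      have : (𝓝[V] b).NeBot := mem_closure_iff_nhdsWithin_neBot.1 hbc
      obtain ⟨z, hz1, hz2⟩ := (h1.and self_mem_nhdsWithin).exists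
      exact ⟨z, hz2, hz2, hz1⟩
    · rintro z ⟨hzc, hzV⟩
      refine ⟨hzV, ?_⟩
      obtain ⟨R, hR, hRV⟩ := Metric.isOpen_iff.1 hVo z hzV
      obtain ⟨q, hqN, hqz⟩ := Metric.mem_closure_iff.1 hzc (R / 4) (by positivity)
      refine strong_local hVo hd hlap hle (q := q) (r := R / 2) (by positivity) hqN.2 ?_ ?_
      · intro w hw2
        apply hRV
        have h1 := sqd_bound (by positivity) hw2
        have h2 := dist_triangle w q z
        rw [dist_comm q z] at h2
        rw [Metric.mem_ball]
        linarith
      · have := sqd_lt hqz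
        nlinarith
  exact fun p hp => (hsub hp).2
end
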